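/- arXiv:math/0412013 — 5 statements merged into one kernel-verified Lean document; each statement's English description precedes it below -/
import Mathlib

section
/- Let S be a simple artinian k-algebra and let S^e := S ⊗_k S^op. Then the projective dimension of S as a left S^e-module is finite if and only if the left global dimension of S^e is finite; and in that case pdim_{S^e}(S) = gldim(S^e). -/
/-!
Statement 0 (Lemma 1.3(b)): for a simple artinian `k`-algebra `S`, the projective dimension
of `S` as a left module over its enveloping algebra `S^e := S ⊗[k] Sᵐᵒᵖ` is finite iff the
left global dimension of `S^e` is finite, and in that case the two numbers coincide.
-/

open CategoryTheory Limits TensorProduct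

universe u

/-- The injective dimension of a module `M`, defined as the least `n : ℕ∞` for which
there is an injective resolution of `M` that vanishes in all cohomological degrees `> n`. -/
noncomputable def ModuleCat.injDim {R : Type u} [Ring R] (M : ModuleCat.{u} R) : ℕ∞ :=
  sInf {n : ℕ∞ | ∃ I : InjectiveResolution M, ∀ i : ℕ, n < (i : ℕ∞) → IsZero (I.cocomplex.X i)}

/-- The projective dimension of a module `M`, defined as the least `n : ℕ∞` for which
there is a projective resolution of `M` that vanishes in all homological degrees `> n`. -/
noncomputable def ModuleCat.projDim {R : Type u} [Ring R] (M : ModuleCat.{u} R) : ℕ∞ :=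
  sInf {n : ℕ∞ | ∃ P : ProjectiveResolution M, ∀ i : ℕ, n < (i : ℕ∞) → IsZero (P.complex.X i)}

/-- The injective dimension of a ring as a left module over itself. -/
noncomputable def Ring.selfInjDim (R : Type u) [Ring R] : ℕ∞ :=
  ModuleCat.injDim (ModuleCat.of R R)

/-- The left global dimension of a ring: the supremum of the projective dimensions
of all left `R`-modules. -/
noncomputable def Ring.globalDim (R : Type u) [Ring R] : ℕ∞ :=
  ⨆ M : ModuleCat.{u} R, M.projDim

/-- `S` is a left module over its enveloping algebra `S ⊗[k] Sᵐᵒᵖ`, via `(a ⊗ bᵒᵖ) • x = a * x * b`. -/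
noncomputable instance (priority := 50) envModule (k : Type u) [Field k] (A : Type u) [Ring A] [Algebra k A] :
    Module (A ⊗[k] Aᵐᵒᵖ) A :=
  TensorProduct.Algebra.module


namespace PD
open Abelian

section res
variable {C : Type*} [Category C] [Abelian C]

theorem exact_of_epi_mono {A K P X : C} (p : A ⟶ K) (i : K ⟶ P) (q : P ⟶ X) (w : i ≫ q = 0)
    [Epi p] (h : (ShortComplex.mk i q w).Exact) :
    (ShortComplex.mk (p ≫ i) q (by simp [w])).Exact := by
  let α : ShortComplex.mk (p ≫ i) q (by simp [w]) ⟶ ShortComplex.mk i q w :=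
    { τ₁ := p
      τ₂ := 𝟙 _
      τ₃ := 𝟙 _ }
  exact (ShortComplex.exact_iff_of_epi_of_isIso_of_mono α).2 h

theorem exact_of_mono_comp {A K P X : C} (p : A ⟶ K) (i : K ⟶ P) (q : P ⟶ X) (w : p ≫ i = 0)
    [Mono q] (h : (ShortComplex.mk p i w).Exact) :
    (ShortComplex.mk p (i ≫ q) (by simp [reassoc_of% w])).Exact := by
  let α : ShortComplex.mk p i w ⟶ ShortComplex.mk p (i ≫ q) (by simp [reassoc_of% w]) :=
    { τ₁ := 𝟙 _
      τ₂ := 𝟙 _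
      τ₃ := q }
  exact (ShortComplex.exact_iff_of_epi_of_isIso_of_mono α).1 h

theorem splice_exactAt {K P : C} (i : K ⟶ P) [Mono i]
    (Q : ProjectiveResolution K) (p : Q.complex.X 0 ⟶ K) (hp0 : Q.complex.d 1 0 ≫ p = 0)
    (hp : (ShortComplex.mk _ _ hp0).Exact)
    (hw : Q.complex.d 1 0 ≫ (p ≫ i) = 0) (n : ℕ) :
    (ChainComplex.augment Q.complex (p ≫ i) hw).ExactAt (n + 1) := by
  rw [HomologicalComplex.exactAt_iff' _ (n + 1 + 1) (n + 1) n (by simp) (by simp)]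
  match n with
  | 0 => exact exact_of_mono_comp _ _ i _ hp
  | n + 1 => exact Q.exact_succ n

theorem exists_splice {K P X : C} (i : K ⟶ P) (q : P ⟶ X) (w : i ≫ q = 0)
    (h : (ShortComplex.mk i q w).ShortExact) [Projective P]
    (Q : ProjectiveResolution K) :
    ∃ R : ProjectiveResolution X, ∀ n, IsZero (Q.complex.X n) → IsZero (R.complex.X (n + 1)) := by
  have hm : Mono i := h.mono_f
  have he : Epi q := h.epi_g
  obtain ⟨p, hpe, hp0, hp⟩ : ∃ (p : Q.complex.X 0 ⟶ K) (_ : Epi p)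
      (hp0 : Q.complex.d 1 0 ≫ p = 0), (ShortComplex.mk _ _ hp0).Exact :=
    ⟨Q.π.f 0, inferInstanceAs (Epi (Q.π.f 0)), Q.complex_d_comp_π_f_zero, Q.exact₀⟩
  have hw : Q.complex.d 1 0 ≫ (p ≫ i) = 0 := by
    rw [← Category.assoc, hp0, zero_comp]
  have hw' : (p ≫ i) ≫ q = 0 := by
    rw [Category.assoc, w, comp_zero]
  let D := ChainComplex.augment Q.complex (p ≫ i) hw
  have hD : D.d 1 0 ≫ q = 0 := hw'
  let π : D ⟶ (ChainComplex.single₀ C).obj X :=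
    (ChainComplex.toSingle₀Equiv D X).symm ⟨q, hD⟩
  have hπ : π.f 0 = q := ChainComplex.toSingle₀Equiv_symm_apply_f_zero _ _
  refine ⟨{ complex := D, projective := ?_, π := π, quasiIso := ⟨?_⟩ }, ?_⟩
  · rintro (_ | n)
    · change Projective P; infer_instance
    · change Projective (Q.complex.X n); infer_instance
  · rintro (_ | n)
    · rw [ChainComplex.quasiIsoAt₀_iff, ShortComplex.quasiIso_iff_of_zeros']
      · have h1 := exact_of_epi_mono p i q w h.exact
        refine (ShortComplex.exact_and_epi_g_iff_of_iso ?_).2 ⟨h1, he⟩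
        exact ShortComplex.isoMk (Iso.refl _) (Iso.refl _) (Iso.refl _)
          ((Category.id_comp (p ≫ i)).trans (Category.comp_id (p ≫ i)).symm)
          ((Category.id_comp q).trans (hπ.symm.trans (Category.comp_id (π.f 0)).symm))
      all_goals rfl
    · rw [quasiIsoAt_iff_exactAt']
      · exact splice_exactAt i Q p hp0 hp hw n
      · apply ChainComplex.exactAt_succ_single_obj
  · intro n hn
    exact hn

theorem exists_res [EnoughProjectives C] (n : ℕ) : ∀ (X : C), HasProjectiveDimensionLE X n →
    ∃ R : ProjectiveResolution X, ∀ i, n < i → IsZero (R.complex.X i) := by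
  induction n with
  | zero =>
    intro X h
    have : Projective X := (projective_iff_hasProjectiveDimensionLE_zero X).2 h
    refine ⟨ProjectiveResolution.self X, fun i hi => ?_⟩
    apply HomologicalComplex.isZero_single_obj_X
    simp; omega
  | succ n ih =>
    intro X h
    have hS : (ShortComplex.mk (kernel.ι (Projective.π X)) (Projective.π X)
      (kernel.condition _)).ShortExact :=
      { exact := ShortComplex.exact_kernel _ }
    have := (hS.hasProjectiveDimensionLT_X₃_iff n (by dsimp; infer_instance)).1 h
    obtain ⟨Q, hQ⟩ := ih _ this
    obtain ⟨R, hR⟩ := exists_splice _ _ _ hS Q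
    refine ⟨R, fun i hi => ?_⟩
    obtain ⟨j, rfl⟩ : ∃ j, i = j + 1 := ⟨i - 1, by omega⟩
    exact hR j (hQ j (by omega))

theorem le_of_res {X : C} (R : ProjectiveResolution X) (n : ℕ)
    (h : ∀ i, n < i → IsZero (R.complex.X i)) : HasProjectiveDimensionLE X n := by
  let := HasExt.standard C
  refine HasProjectiveDimensionLT.mk fun i hi Y e => ?_
  obtain ⟨f, hf, rfl⟩ := R.extMk_surjective e (i + 1) rfl
  obtain rfl : f = 0 := (h i hi).eq_of_src _ _
  simp

end res

theorem projDim_le_iff {R : Type u} [Ring R] (M : ModuleCat.{u} R) (n : ℕ) :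
    M.projDim ≤ n ↔ HasProjectiveDimensionLE M n := by
  constructor
  · intro h
    have hne : ({n : ℕ∞ | ∃ P : ProjectiveResolution M,
        ∀ i : ℕ, n < (i : ℕ∞) → IsZero (P.complex.X i)}).Nonempty :=
      ⟨⊤, ProjectiveResolution.of M, fun i hi => absurd hi not_top_lt⟩
    obtain ⟨P, hP⟩ := csInf_mem hne
    exact le_of_res P n fun i hi => hP i (lt_of_le_of_lt h (by exact_mod_cast hi))
  · intro h
    obtain ⟨P, hP⟩ := exists_res n M h
    exact sInf_le ⟨P, fun i hi => hP i (by exact_mod_cast hi)⟩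

theorem final {R : Type u} [Ring R] (X : ModuleCat.{u} R)
    (h : ∀ n, HasProjectiveDimensionLE X n → ∀ M : ModuleCat.{u} R, HasProjectiveDimensionLE M n) :
    (X.projDim ≠ ⊤ ↔ Ring.globalDim R ≠ ⊤) ∧ (X.projDim ≠ ⊤ → X.projDim = Ring.globalDim R) := by
  have h1 : X.projDim ≤ Ring.globalDim R := le_iSup (fun M : ModuleCat.{u} R => M.projDim) X
  have h2 : X.projDim ≠ ⊤ → X.projDim = Ring.globalDim R := by
    intro hX
    refine le_antisymm h1 (iSup_le fun M => ?_)
    obtain ⟨n, hn⟩ := ENat.ne_top_iff_exists.1 hX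
    rw [← hn]
    exact (projDim_le_iff M n).2 (h n ((projDim_le_iff X n).1 hn.ge) M)
  exact ⟨⟨fun hX => h2 hX ▸ hX, fun hG hX => hG (top_le_iff.1 (hX ▸ h1))⟩, h2⟩


theorem zs {R : Type*} [Ring R] {X : Type*} [AddCommGroup X] [Module R X] (x : X) :
    (0 : R) • x = 0 := zero_smul R x

section alg
variable {k : Type u} [Field k] {S : Type u} [Ring S] [Algebra k S]

variable (k) in
/-- the left action of `s`, as an element of the enveloping algebra -/
noncomputable def lf (s : S) : S ⊗[k] Sᵐᵒᵖ := s ⊗ₜ[k] (1 : Sᵐᵒᵖ)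

variable (k) in
/-- the right action of `t`, as an element of the enveloping algebra -/
noncomputable def rt (t : Sᵐᵒᵖ) : S ⊗[k] Sᵐᵒᵖ := (1 : S) ⊗ₜ[k] t

theorem lf_mul (s s' : S) : lf k (s * s') = lf k s * lf k s' := by simp [lf]
theorem rt_mul (s s' : Sᵐᵒᵖ) : rt k (s * s') = rt k s * rt k s' := by simp [rt]
theorem lf_add (s s' : S) : lf k (s + s') = lf k s + lf k s' := by simp [lf, add_tmul]
theorem rt_add (s s' : Sᵐᵒᵖ) : rt k (s + s') = rt k s + rt k s' := by simp [rt, tmul_add]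
theorem lf_one : lf k (1 : S) = 1 := rfl
theorem rt_one : rt k (1 : Sᵐᵒᵖ) = 1 := rfl
theorem lf_zero : lf k (0 : S) = 0 := by simp [lf]
theorem rt_zero : rt k (0 : Sᵐᵒᵖ) = 0 := by simp [rt]
theorem lf_mul_rt (s : S) (t : Sᵐᵒᵖ) : lf k s * rt k t = s ⊗ₜ t := by simp [lf, rt]
theorem rt_mul_lf (s : S) (t : Sᵐᵒᵖ) : rt k t * lf k s = s ⊗ₜ t := by simp [lf, rt]
theorem lf_alg (c : k) : lf k (algebraMap k S c) = rt k (algebraMap k Sᵐᵒᵖ c) := by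
  simp [lf, rt, Algebra.algebraMap_eq_smul_one, smul_tmul']

section
variable {M : Type*} [AddCommGroup M] [Module (S ⊗[k] Sᵐᵒᵖ) M]
theorem lf_rt (s : S) (t : Sᵐᵒᵖ) (m : M) : lf k s • rt k t • m = rt k t • lf k s • m := by
  rw [smul_smul, smul_smul, lf_mul_rt, rt_mul_lf]
theorem tmul_smul' (s : S) (t : Sᵐᵒᵖ) (m : M) : (s ⊗ₜ[k] t) • m = lf k s • rt k t • m := by
  rw [smul_smul, lf_mul_rt]
end

/-- additive maps commuting with both actions are linear -/
noncomputable def mkLin {X Y : Type*} [AddCommGroup X] [Module (S ⊗[k] Sᵐᵒᵖ) X]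
    [AddCommGroup Y] [Module (S ⊗[k] Sᵐᵒᵖ) Y] (g : X →+ Y)
    (hl : ∀ (s : S) x, g (lf k s • x) = lf k s • g x)
    (hr : ∀ (t : Sᵐᵒᵖ) x, g (rt k t • x) = rt k t • g x) :
    X →ₗ[S ⊗[k] Sᵐᵒᵖ] Y where
  toFun := g
  map_add' := g.map_add
  map_smul' r x := by
    induction r using TensorProduct.induction_on with
    | zero =>
      have h1 : (0 : S ⊗[k] Sᵐᵒᵖ) • x = 0 := zs x
      have h2 : (0 : S ⊗[k] Sᵐᵒᵖ) • g x = 0 := zs (g x)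
      exact ((congrArg g h1).trans g.map_zero).trans h2.symm
    | tmul s t => simp only [tmul_smul', hl, hr, RingHom.id_apply]
    | add a b ha hb => simp only [add_smul, map_add, ha, hb, RingHom.id_apply] at *

/-! ### right linear maps -/

section F
variable (k S)
variable (M N : Type u) [AddCommGroup M] [Module (S ⊗[k] Sᵐᵒᵖ) M]
    [AddCommGroup N] [Module (S ⊗[k] Sᵐᵒᵖ) N]

/-- right linear maps -/
noncomputable def FSub : AddSubgroup (M →+ N) where
  carrier := {f | ∀ (t : Sᵐᵒᵖ) m, f (rt k t • m) = rt k t • f m}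
  zero_mem' := by intro t m; simp
  add_mem' := by intro a b ha hb t m; simp [ha t m, hb t m]
  neg_mem' := by intro a ha t m; simp [ha t m]

/-- right linear maps -/
def F : Type u := FSub k S M N

noncomputable instance : AddCommGroup (F k S M N) := inferInstanceAs (AddCommGroup (FSub k S M N))

variable {k S M N}

noncomputable def F.fn (f : F k S M N) : M →+ N := f.1
theorem F.fn_rt (f : F k S M N) (t : Sᵐᵒᵖ) (m : M) : f.fn (rt k t • m) = rt k t • f.fn m := f.2 t m
@[ext] theorem F.ext {f g : F k S M N} (h : ∀ m, f.fn m = g.fn m) : f = g :=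
  Subtype.ext (AddMonoidHom.ext h)
noncomputable def F.mk (f : M →+ N) (h : ∀ (t : Sᵐᵒᵖ) m, f (rt k t • m) = rt k t • f m) :
    F k S M N := ⟨f, h⟩
@[simp] theorem F.fn_mk (f : M →+ N) (h : ∀ (t : Sᵐᵒᵖ) m, f (rt k t • m) = rt k t • f m) (m : M) :
    (F.mk f h).fn m = f m := rfl
@[simp] theorem F.fn_add (f g : F k S M N) (m : M) : (f + g).fn m = f.fn m + g.fn m := rfl
@[simp] theorem F.fn_zero (m : M) : (0 : F k S M N).fn m = 0 := rfl

noncomputable instance F.modS : Module S (F k S M N) where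
  smul s f := F.mk ((DistribSMul.toAddMonoidHom N (lf k s)).comp f.fn) (by
    intro t m; simp [F.fn_rt, lf_rt])
  one_smul f := F.ext fun m => by change lf k (1 : S) • f.fn m = _; simp [lf_one]
  mul_smul s s' f := F.ext fun m => by
    change lf k (s * s') • f.fn m = lf k s • lf k s' • f.fn m; simp [lf_mul, mul_smul]
  smul_zero s := F.ext fun m => by change lf k s • (0 : N) = 0; simp
  smul_add s f g := F.ext fun m => by
    change lf k s • (f.fn m + g.fn m) = lf k s • f.fn m + lf k s • g.fn m; simp
  add_smul s s' f := F.ext fun m => by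
    change lf k (s + s') • f.fn m = lf k s • f.fn m + lf k s' • f.fn m; simp [lf_add, add_smul]
  zero_smul f := F.ext fun m => by change lf k (0 : S) • f.fn m = 0; rw [lf_zero]; exact zs (f.fn m)

theorem F.fn_smulS (s : S) (f : F k S M N) (m : M) : (s • f).fn m = lf k s • f.fn m := rfl

noncomputable instance F.modSop : Module Sᵐᵒᵖ (F k S M N) where
  smul s f := F.mk (f.fn.comp (DistribSMul.toAddMonoidHom M (lf k s.unop))) (by
    intro t m; simp [F.fn_rt, lf_rt])
  one_smul f := F.ext fun m => by change f.fn (lf k (1 : S) • m) = _; simp [lf_one]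
  mul_smul s s' f := F.ext fun m => by
    change f.fn (lf k (s'.unop * s.unop) • m) = f.fn (lf k s'.unop • lf k s.unop • m)
    simp [lf_mul, mul_smul]
  smul_zero s := F.ext fun m => rfl
  smul_add s f g := F.ext fun m => rfl
  add_smul s s' f := F.ext fun m => by
    change f.fn (lf k (s.unop + s'.unop) • m) = f.fn (lf k s.unop • m) + f.fn (lf k s'.unop • m)
    simp [lf_add, add_smul]
  zero_smul f := F.ext fun m => by
    change f.fn (lf k (0 : S) • m) = 0
    rw [lf_zero]
    exact (congrArg f.fn (zs m)).trans f.fn.map_zero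

theorem F.fn_smulSop (s : Sᵐᵒᵖ) (f : F k S M N) (m : M) :
    (s • f).fn m = f.fn (lf k s.unop • m) := rfl

noncomputable instance F.modk : Module k (F k S M N) := Module.compHom _ (algebraMap k S)

theorem F.smulk (c : k) (f : F k S M N) : c • f = algebraMap k S c • f := rfl

instance : IsScalarTower k S (F k S M N) :=
  ⟨fun c s f => by rw [F.smulk, Algebra.smul_def, mul_smul]⟩

instance : SMulCommClass S Sᵐᵒᵖ (F k S M N) :=
  ⟨fun _ _ _ => F.ext fun _ => rfl⟩

instance : IsScalarTower k Sᵐᵒᵖ (F k S M N) :=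
  ⟨fun c t f => F.ext fun m => by
    rw [F.smulk, F.fn_smulS, F.fn_smulSop, F.fn_smulSop, lf_alg, ← F.fn_rt, ← lf_alg,
      MulOpposite.unop_smul, Algebra.smul_def, lf_mul, mul_smul]⟩

noncomputable instance F.modE : Module (S ⊗[k] Sᵐᵒᵖ) (F k S M N) := TensorProduct.Algebra.module

theorem F.tmul_smul (s : S) (t : Sᵐᵒᵖ) (f : F k S M N) : (s ⊗ₜ[k] t) • f = s • t • f := rfl

theorem F.fn_lf (s : S) (f : F k S M N) (m : M) : (lf k s • f).fn m = lf k s • f.fn m := by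
  rw [lf, F.tmul_smul, one_smul]; rfl

theorem F.fn_rt_smul (t : Sᵐᵒᵖ) (f : F k S M N) (m : M) :
    (rt k t • f).fn m = f.fn (lf k t.unop • m) := by
  rw [rt, F.tmul_smul, one_smul]; rfl

variable {N' : Type u} [AddCommGroup N'] [Module (S ⊗[k] Sᵐᵒᵖ) N']

variable (M) in
/-- functoriality -/
noncomputable def Fmap (g : N →ₗ[S ⊗[k] Sᵐᵒᵖ] N') : F k S M N →ₗ[S ⊗[k] Sᵐᵒᵖ] F k S M N' :=
  mkLin (AddMonoidHom.mk' (fun f => F.mk (g.toAddMonoidHom.comp f.fn) (by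
    intro t m; simp [F.fn_rt])) (fun f f' => F.ext fun m => by
      change g ((f + f').fn m) = g (f.fn m) + g (f'.fn m)
      rw [F.fn_add, map_add]))
    (fun s f => F.ext fun m => by
      change g ((lf k s • f).fn m) = _
      rw [F.fn_lf, F.fn_lf, map_smul]
      rfl)
    (fun s f => F.ext fun m => by
      change g ((rt k s • f).fn m) = _
      rw [F.fn_rt_smul, F.fn_rt_smul]
      rfl)

@[simp] theorem Fmap_fn (g : N →ₗ[S ⊗[k] Sᵐᵒᵖ] N') (f : F k S M N) (m : M) :
    (Fmap M g f).fn m = g (f.fn m) := rfl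

end F

/-! ### Splittings -/
section split
variable {X Y : Type u} [AddCommGroup X] [Module (S ⊗[k] Sᵐᵒᵖ) X]
    [AddCommGroup Y] [Module (S ⊗[k] Sᵐᵒᵖ) Y] [IsSimpleRing S] [IsArtinianRing S]

variable (k S) in
noncomputable def rtHom : Sᵐᵒᵖ →+* S ⊗[k] Sᵐᵒᵖ where
  toFun := rt k
  map_one' := rt_one
  map_mul' := rt_mul
  map_zero' := rt_zero
  map_add' := rt_add

theorem exists_section (g : X →ₗ[S ⊗[k] Sᵐᵒᵖ] Y) (hg : Function.Surjective g) :
    ∃ σ : F k S Y X, ∀ y, g (σ.fn y) = y := by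
  let : Module Sᵐᵒᵖ X := Module.compHom X (rtHom k S)
  let : Module Sᵐᵒᵖ Y := Module.compHom Y (rtHom k S)
  let g' : X →ₗ[Sᵐᵒᵖ] Y :=
    { toFun := g, map_add' := g.map_add, map_smul' := fun t x => g.map_smul (rt k t) x }
  have := Module.projective_of_isSemisimpleRing Sᵐᵒᵖ Y
  obtain ⟨σ, hσ⟩ := Module.projective_lifting_property g' LinearMap.id hg
  exact ⟨F.mk σ.toAddMonoidHom (fun t m => σ.map_smul t m), fun y => LinearMap.congr_fun hσ y⟩

theorem exists_retraction (g : X →ₗ[S ⊗[k] Sᵐᵒᵖ] Y) (hg : Function.Injective g) :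
    ∃ ρ : F k S Y X, ∀ x, ρ.fn (g x) = x := by
  let : Module Sᵐᵒᵖ X := Module.compHom X (rtHom k S)
  let : Module Sᵐᵒᵖ Y := Module.compHom Y (rtHom k S)
  let g' : X →ₗ[Sᵐᵒᵖ] Y :=
    { toFun := g, map_add' := g.map_add, map_smul' := fun t x => g.map_smul (rt k t) x }
  have hI := Module.injective_of_isSemisimpleRing Sᵐᵒᵖ X
  obtain ⟨σ, hσ⟩ := hI.out g' hg LinearMap.id
  exact ⟨F.mk σ.toAddMonoidHom (fun t m => σ.map_smul t m), fun y => hσ y⟩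

end split

/-! ### coinduced modules -/
section coind
variable (R : Type u) [Ring R] (I : Type u) [AddCommGroup I] [Module R I]
/-- coinduced module -/
def Coind : Type u := R →+ I
noncomputable instance : AddCommGroup (Coind R I) := inferInstanceAs (AddCommGroup (R →+ I))
variable {R I}
def Coind.fn (f : Coind R I) : R →+ I := f
theorem Coind.ext {f g : Coind R I} (h : ∀ m, f.fn m = g.fn m) : f = g :=
  AddMonoidHom.ext h
noncomputable instance : Module R (Coind R I) where
  smul r f := (f.fn.comp (AddMonoidHom.mulRight r) : R →+ I)
  one_smul f := Coind.ext fun m => by change f.fn (m * 1) = _; simp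
  mul_smul s s' f := Coind.ext fun m => by
    change f.fn (m * (s * s')) = f.fn (m * s * s'); simp [mul_assoc]
  smul_zero s := Coind.ext fun m => rfl
  smul_add s f g := Coind.ext fun m => rfl
  add_smul s s' f := Coind.ext fun m => by
    change f.fn (m * (s + s')) = f.fn (m * s) + f.fn (m * s'); simp [mul_add]
  zero_smul f := Coind.ext fun m => by change f.fn (m * 0) = 0; simp
theorem Coind.fn_smul (r : R) (f : Coind R I) (x : R) : (r • f).fn x = f.fn (x * r) := rfl
theorem Coind.fn_add (f g : Coind R I) (x : R) : (f + g).fn x = f.fn x + g.fn x := rfl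

variable (R I) in
noncomputable def Coind.ι : I →ₗ[R] Coind R I where
  toFun x := (AddMonoidHom.mk' (fun r : R => r • x) (fun a b => add_smul a b x) : R →+ I)
  map_add' x y := Coind.ext fun m => smul_add m x y
  map_smul' r x := Coind.ext fun m => smul_smul m r x
theorem Coind.ι_fn (x : I) (r : R) : (Coind.ι R I x).fn r = r • x := rfl
theorem Coind.ι_inj : Function.Injective (Coind.ι R I) := fun x y h => by
  have := congrArg (fun f => Coind.fn f 1) h
  simpa [Coind.ι_fn] using this
end coind

section inj
variable {A B M I : Type u} [AddCommGroup A] [Module (S ⊗[k] Sᵐᵒᵖ) A]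
    [AddCommGroup B] [Module (S ⊗[k] Sᵐᵒᵖ) B] [AddCommGroup M] [Module (S ⊗[k] Sᵐᵒᵖ) M]
    [AddCommGroup I] [Module (S ⊗[k] Sᵐᵒᵖ) I]

/-- the auxiliary map -/
noncomputable def phi (f : A →ₗ[S ⊗[k] Sᵐᵒᵖ] F k S M I) (ρ : F k S B A) (b : B) (m : M) :
    Coind (S ⊗[k] Sᵐᵒᵖ) I :=
  TensorProduct.liftAddHom (R := k) (M := S) (N := Sᵐᵒᵖ) (P := I)
    (AddMonoidHom.mk' (fun s => AddMonoidHom.mk' (fun t => (f (ρ.fn (lf k s • b))).fn (rt k t • m))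
      (fun t t' => by rw [rt_add, add_smul, map_add]))
      (fun s s' => by ext t; simp [lf_add, add_smul]))
    (fun c s t => by
      simp only [AddMonoidHom.mk'_apply]
      rw [Algebra.smul_def, Algebra.smul_def, lf_mul, lf_alg, mul_smul, F.fn_rt ρ, f.map_smul,
        F.fn_rt_smul, rt_mul, mul_smul, ← lf_alg]
      rfl)

theorem phi_tmul (f : A →ₗ[S ⊗[k] Sᵐᵒᵖ] F k S M I) (ρ : F k S B A) (b : B) (m : M) (s : S)
    (t : Sᵐᵒᵖ) : (phi f ρ b m).fn (s ⊗ₜ t) = (f (ρ.fn (lf k s • b))).fn (rt k t • m) := rfl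

theorem coind_ext {f g : Coind (S ⊗[k] Sᵐᵒᵖ) I}
    (h : ∀ (s : S) (t : Sᵐᵒᵖ), f.fn (s ⊗ₜ t) = g.fn (s ⊗ₜ t)) : f = g := by
  refine Coind.ext fun x => ?_
  induction x using TensorProduct.induction_on with
  | zero => rw [map_zero, map_zero]
  | tmul s t => exact h s t
  | add a b ha hb => rw [map_add, map_add, ha, hb]

theorem F_injective [IsSimpleRing S] [IsArtinianRing S] (hI : Module.Injective (S ⊗[k] Sᵐᵒᵖ) I) :
    Module.Injective (S ⊗[k] Sᵐᵒᵖ) (F k S M I) := by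
  obtain ⟨π, hπ⟩ := hI.out (Coind.ι (S ⊗[k] Sᵐᵒᵖ) I) Coind.ι_inj LinearMap.id
  refine ⟨fun A B _ _ _ _ j hj f => ?_⟩
  obtain ⟨ρ, hρ⟩ := exists_retraction j hj
  let f0 (b : B) : F k S M I := F.mk (AddMonoidHom.mk' (fun m => π (phi f ρ b m)) (by
      intro m m'
      rw [← map_add]
      congr 1
      refine coind_ext fun s t => ?_
      rw [Coind.fn_add]
      simp only [phi_tmul, smul_add, map_add]))
    (by
      intro t m
      simp only [AddMonoidHom.mk'_apply]
      rw [← map_smul]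
      congr 1
      refine coind_ext fun s t' => ?_
      rw [Coind.fn_smul, rt, Algebra.TensorProduct.tmul_mul_tmul, mul_one]
      simp only [phi_tmul, rt_mul, mul_smul]
      rfl)
  have hf0 (b : B) (m : M) : (f0 b).fn m = π (phi f ρ b m) := rfl
  refine ⟨mkLin (AddMonoidHom.mk' f0 ?_) ?_ ?_, ?_⟩
  · intro b b'
    ext m
    rw [F.fn_add, hf0, hf0, hf0, ← map_add]
    congr 1
    refine coind_ext fun s t => ?_
    rw [Coind.fn_add]
    simp only [phi_tmul, smul_add, map_add, F.fn_add]
  · intro s b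
    ext m
    simp only [AddMonoidHom.mk'_apply]
    rw [F.fn_lf, hf0, hf0, ← map_smul]
    congr 1
    refine coind_ext fun s' t' => ?_
    rw [Coind.fn_smul, lf, Algebra.TensorProduct.tmul_mul_tmul, mul_one]
    simp only [phi_tmul, lf_mul, mul_smul]
    rfl
  · intro t b
    ext m
    simp only [AddMonoidHom.mk'_apply]
    rw [F.fn_rt_smul, hf0, hf0]
    congr 1
    refine coind_ext fun s' t' => ?_
    simp only [phi_tmul]
    rw [lf_rt, F.fn_rt ρ, f.map_smul, F.fn_rt_smul, lf_rt]
  · intro a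
    ext m
    change π (phi f ρ (j a) m) = _
    have : phi f ρ (j a) m = Coind.ι _ _ ((f a).fn m) := by
      refine coind_ext fun s' t' => ?_
      rw [phi_tmul, ← j.map_smul, hρ, f.map_smul, F.fn_lf, F.fn_rt, Coind.ι_fn, tmul_smul']
    rw [this]
    exact hπ _
end inj
end alg

section ext
variable {k : Type u} [Field k] {S : Type u} [Ring S] [Algebra k S]

theorem lf_smul_S (s x : S) : lf k s • x = s * x := by
  change s • (1 : Sᵐᵒᵖ) • x = _
  simp

theorem rt_smul_S (t : Sᵐᵒᵖ) (x : S) : rt k t • x = x * t.unop := by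
  change (1 : S) • t • x = _
  simp

/-- the short complex obtained by applying `F M` -/
noncomputable def Fsc (M : ModuleCat.{u} (S ⊗[k] Sᵐᵒᵖ)) (T : ShortComplex (ModuleCat.{u} (S ⊗[k] Sᵐᵒᵖ))) :
    ShortComplex (ModuleCat.{u} (S ⊗[k] Sᵐᵒᵖ)) where
  X₁ := ModuleCat.of _ (F k S M T.X₁)
  X₂ := ModuleCat.of _ (F k S M T.X₂)
  X₃ := ModuleCat.of _ (F k S M T.X₃)
  f := ModuleCat.ofHom (Fmap M T.f.hom)
  g := ModuleCat.ofHom (Fmap M T.g.hom)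
  zero := by
    ext f : 2
    refine F.ext fun m => ?_
    exact LinearMap.congr_fun (congrArg ModuleCat.Hom.hom T.zero) (F.fn f m)

variable [IsSimpleRing S] [IsArtinianRing S]

theorem Fsc_exact (M : ModuleCat.{u} (S ⊗[k] Sᵐᵒᵖ))
    (T : ShortComplex (ModuleCat.{u} (S ⊗[k] Sᵐᵒᵖ))) (hT : T.ShortExact) :
    (Fsc M T).ShortExact := by
  have hi : Function.Injective T.f.hom := (ModuleCat.mono_iff_injective _).1 hT.mono_f
  have hs : Function.Surjective T.g.hom := (ModuleCat.epi_iff_surjective _).1 hT.epi_g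
  have he := (ShortComplex.ShortExact.moduleCat_exact_iff_function_exact T).1 hT.exact
  refine ShortComplex.ShortExact.mk' ?_ ?_ ?_
  · rw [ShortComplex.ShortExact.moduleCat_exact_iff_function_exact]
    intro f
    constructor
    · intro hf
      have h0 (m : M) : T.g.hom (F.fn f m) = 0 := congrArg (fun f => F.fn f m) hf
      choose p hp using fun m => (he (F.fn f m)).1 (h0 m)
      refine ⟨F.mk (AddMonoidHom.mk' p ?_) ?_, ?_⟩
      · intro a b
        apply hi
        rw [map_add]
        erw [hp, hp, hp]
        exact map_add _ _ _
      · intro t a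
        apply hi
        rw [LinearMap.map_smul]
        erw [hp, hp]
        exact F.fn_rt f t a
      · exact F.ext fun m => hp m
    · rintro ⟨f, rfl⟩
      exact F.ext fun m => (he _).2 ⟨_, rfl⟩
  · rw [ModuleCat.mono_iff_injective]
    intro f f' h
    exact F.ext fun m => hi (congrArg (fun f => F.fn f m) h)
  · rw [ModuleCat.epi_iff_surjective]
    intro f
    obtain ⟨σ, hσ⟩ := exists_section T.g.hom hs
    refine ⟨F.mk (σ.fn.comp (F.fn f)) ?_, ?_⟩
    · intro t m
      exact (congrArg σ.fn (F.fn_rt f t m)).trans (F.fn_rt σ t _)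
    · exact F.ext fun m => hσ _

theorem lift_of_lift (M I N' : ModuleCat.{u} (S ⊗[k] Sᵐᵒᵖ)) (g : I ⟶ N')
    (H : ∀ w : ModuleCat.of (S ⊗[k] Sᵐᵒᵖ) S ⟶ ModuleCat.of _ (F k S M N'),
      ∃ u : ModuleCat.of (S ⊗[k] Sᵐᵒᵖ) S ⟶ ModuleCat.of _ (F k S M I),
        u ≫ ModuleCat.ofHom (Fmap M g.hom) = w)
    (h : M ⟶ N') : ∃ l : M ⟶ I, l ≫ g = h := by
  let w : S →ₗ[S ⊗[k] Sᵐᵒᵖ] F k S M N' := mkLin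
    (AddMonoidHom.mk' (fun s => F.mk
      ((DistribSMul.toAddMonoidHom N' (lf k s)).comp h.hom.toAddMonoidHom) (by
        intro t m
        change lf k s • h.hom (rt k t • m) = rt k t • lf k s • h.hom m
        rw [LinearMap.map_smul, lf_rt])) (by
      intro a b
      refine F.ext fun m => ?_
      change lf k (a + b) • h.hom m = lf k a • h.hom m + lf k b • h.hom m
      rw [lf_add, add_smul]))
    (by
      intro s x
      refine F.ext fun m => ?_
      rw [F.fn_lf]
      change lf k (lf k s • x) • h.hom m = lf k s • lf k x • h.hom m
      rw [lf_smul_S, lf_mul, mul_smul])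
    (by
      intro t x
      refine F.ext fun m => ?_
      rw [F.fn_rt_smul]
      change lf k (rt k t • x) • h.hom m = lf k x • h.hom (lf k t.unop • m)
      rw [rt_smul_S, lf_mul, mul_smul, LinearMap.map_smul])
  have hw (s : S) (m : M) : (w s).fn m = lf k s • h.hom m := rfl
  obtain ⟨u, hu⟩ := H (ModuleCat.ofHom w)
  let v : S →ₗ[S ⊗[k] Sᵐᵒᵖ] F k S M I := u.hom
  have hv (s : S) (m : M) : g.hom ((v s).fn m) = lf k s • h.hom m := by
    rw [← hw, ← Fmap_fn]
    have := LinearMap.congr_fun (congrArg ModuleCat.Hom.hom hu) s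
    exact congrArg (fun f => F.fn f m) this
  refine ⟨ModuleCat.ofHom (mkLin (v 1).fn ?_ ?_), ?_⟩
  · intro s m
    have h1 : rt k (MulOpposite.op s) • (1 : S) = lf k s • (1 : S) := by
      rw [rt_smul_S, lf_smul_S]; simp
    have h2 := congrArg (fun x => (v x).fn m) h1
    simp only [LinearMap.map_smul v, F.fn_rt_smul, F.fn_lf] at h2
    exact h2
  · intro t m
    exact F.fn_rt _ t m
  · ext m
    have := hv 1 m
    rw [lf_one, one_smul] at this
    exact this

theorem ext_zero (M : ModuleCat.{u} (S ⊗[k] Sᵐᵒᵖ)) (i : ℕ) :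
    ∀ (N : ModuleCat.{u} (S ⊗[k] Sᵐᵒᵖ))
      (_ : ∀ e : Ext.{u} (ModuleCat.of (S ⊗[k] Sᵐᵒᵖ) S) (ModuleCat.of _ (F k S M N)) (i + 1), e = 0)
      (e : Ext.{u} M N (i + 1)), e = 0 := by
  induction i with
  | zero =>
    intro N hN e
    let P := (EnoughInjectives.presentation N).some
    have := P.injective
    have := P.mono
    let T : ShortComplex (ModuleCat.{u} (S ⊗[k] Sᵐᵒᵖ)) :=
      ShortComplex.mk P.f (cokernel.π P.f) (cokernel.condition P.f)
    have hT : T.ShortExact := ShortComplex.ShortExact.mk' (ShortComplex.exact_cokernel P.f)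
      inferInstance inferInstance
    have hF := Fsc_exact M T hT
    obtain ⟨x, rfl⟩ := Ext.covariant_sequence_exact₁ M hT e
      (Ext.eq_zero_of_injective (I := P.J) _) (zero_add 1)
    obtain ⟨h, rfl⟩ := Ext.homEquiv₀.symm.surjective x
    obtain ⟨l, rfl⟩ := lift_of_lift M T.X₂ T.X₃ T.g (fun w => by
      obtain ⟨y, hy⟩ := Ext.covariant_sequence_exact₃ _ hF (Ext.mk₀ w) (zero_add 1) (hN _)
      obtain ⟨z, rfl⟩ := Ext.homEquiv₀.symm.surjective y
      refine ⟨z, Ext.homEquiv₀.symm.injective ?_⟩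
      rw [Ext.homEquiv₀_symm_apply, Ext.mk₀_comp_mk₀] at hy
      exact hy) h
    simp [← Ext.mk₀_comp_mk₀]
  | succ i ih =>
    intro N hN e
    let P := (EnoughInjectives.presentation N).some
    have := P.injective
    have := P.mono
    let T : ShortComplex (ModuleCat.{u} (S ⊗[k] Sᵐᵒᵖ)) :=
      ShortComplex.mk P.f (cokernel.π P.f) (cokernel.condition P.f)
    have hT : T.ShortExact := ShortComplex.ShortExact.mk' (ShortComplex.exact_cokernel P.f)
      inferInstance inferInstance
    have hF := Fsc_exact M T hT
    obtain ⟨x, rfl⟩ := Ext.covariant_sequence_exact₁ M hT e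
      (Ext.eq_zero_of_injective (I := P.J) _) rfl
    have hJ : Module.Injective (S ⊗[k] Sᵐᵒᵖ) P.J :=
      Module.injective_module_of_injective_object (inj := P.injective) _ _
    have hFJ : Injective (Fsc M T).X₂ :=
      Module.injective_object_of_injective_module (inj := F_injective hJ) _ _
    have : x = 0 := by
      refine ih _ (fun y => ?_) x
      obtain ⟨z, rfl⟩ := Ext.covariant_sequence_exact₃ _ hF y rfl (hN _)
      rw [Ext.eq_zero_of_injective z, Ext.zero_comp]
      rfl
    rw [this, Ext.zero_comp]

theorem pd_all (n : ℕ) (h : HasProjectiveDimensionLE (ModuleCat.of (S ⊗[k] Sᵐᵒᵖ) S) n)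
    (M : ModuleCat.{u} (S ⊗[k] Sᵐᵒᵖ)) : HasProjectiveDimensionLE M n := by
  refine HasProjectiveDimensionLT.mk.{u} (fun i hi Y e => ?_)
  obtain ⟨j, rfl⟩ := Nat.exists_eq_add_of_le' (Nat.le_of_add_left_le hi)
  refine ext_zero M j Y (fun e => ?_) e
  exact e.eq_zero_of_hasProjectiveDimensionLT (n + 1) hi

end ext

end PD

theorem stmt_0 (k : Type u) [Field k] (S : Type u) [Ring S] [Algebra k S]
    [IsSimpleRing S] [IsArtinianRing S] :
    (ModuleCat.projDim (ModuleCat.of (S ⊗[k] Sᵐᵒᵖ) S) ≠ ⊤ ↔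
        Ring.globalDim (S ⊗[k] Sᵐᵒᵖ) ≠ ⊤) ∧
      (ModuleCat.projDim (ModuleCat.of (S ⊗[k] Sᵐᵒᵖ) S) ≠ ⊤ →
        ModuleCat.projDim (ModuleCat.of (S ⊗[k] Sᵐᵒᵖ) S) = Ring.globalDim (S ⊗[k] Sᵐᵒᵖ)) := by
  exact PD.final _ PD.pd_all
end

section
/- Let A ⊆ B be k-algebras. Assume that B decomposes as left A-module as B = P ⊕ N where P is a projective generator of the category of left A-modules (i.e., P is projective and every left A-module is a quotient of a direct sum of copies of P), that a similar decomposition holds for B as a right A-module, and that B is flat as a right A-module. Then the injective dimension of A as a left module over itself is at most the injective dimension of B as a left module over itself. -/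
open CategoryTheory Limits TensorProduct

universe u

/-!
Statement 2 (Lemma 1.4(a)): let `A ⊆ B` be `k`-algebras.  Assume `B = P ⊕ N` as left
`A`-modules with `P` a projective generator, similarly on the right, and that `B` is flat as a
right `A`-module.  Then `injdim A ≤ injdim B` (self-injective dimensions of left modules).

Flatness of the right `A`-module `B` is encoded, following Lambek's theorem (which holds over
any ring), as the injectivity of the character module `Hom_ℤ(B, ℚ/ℤ)` as a left `A`-module.
-/

/-- The character module `Hom_ℤ(B, ℚ/ℤ)` of a right `A`-module `B`; it is a left `A`-module
via `(a • c) b = c (b • a)`. -/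
def RightCharacter (A B : Type u) [Ring A] [AddCommGroup B] [Module Aᵐᵒᵖ B] : Type u :=
  B →+ AddCircle (1 : ℚ)

namespace RightCharacter

variable (A B : Type u) [Ring A] [AddCommGroup B] [Module Aᵐᵒᵖ B]

instance : AddCommGroup (RightCharacter A B) :=
  inferInstanceAs (AddCommGroup (B →+ AddCircle (1 : ℚ)))

instance : FunLike (RightCharacter A B) B (AddCircle (1 : ℚ)) :=
  inferInstanceAs (FunLike (B →+ AddCircle (1 : ℚ)) B (AddCircle (1 : ℚ)))

instance : AddMonoidHomClass (RightCharacter A B) B (AddCircle (1 : ℚ)) :=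
  inferInstanceAs (AddMonoidHomClass (B →+ AddCircle (1 : ℚ)) B (AddCircle (1 : ℚ)))

/-- The left `A`-module structure on the character module of the right `A`-module `B`. -/
instance : Module A (RightCharacter A B) where
  smul a c := (c : B →+ AddCircle (1 : ℚ)).comp
    (DistribMulAction.toAddMonoidHom B (MulOpposite.op a))
  one_smul c := AddMonoidHom.ext fun b => by
    show c ((MulOpposite.op (1 : A)) • b) = c b
    rw [MulOpposite.op_one, one_smul]
  mul_smul a a' c := AddMonoidHom.ext fun b => by
    show c ((MulOpposite.op (a * a')) • b) = c ((MulOpposite.op a') • ((MulOpposite.op a) • b))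
    rw [MulOpposite.op_mul, mul_smul]
  smul_zero a := rfl
  smul_add a c c' := rfl
  add_smul a a' c := AddMonoidHom.ext fun b => by
    show c ((MulOpposite.op (a + a')) • b) =
      c ((MulOpposite.op a) • b) + c ((MulOpposite.op a') • b)
    rw [MulOpposite.op_add, add_smul, map_add]
  zero_smul c := AddMonoidHom.ext fun b => by
    show c ((MulOpposite.op (0 : A)) • b) = 0
    rw [MulOpposite.op_zero, zero_smul, map_zero]

end RightCharacter


section Helpers

variable {C : Type*} [Category* C] [Abelian C]

theorem InjRes.hasInjDim [HasExt.{u} C] {Z : C} (I : InjectiveResolution Z) (n : ℕ)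
    (h : ∀ i : ℕ, n < i → IsZero (I.cocomplex.X i)) : HasInjectiveDimensionLT Z (n + 1) := by
  rw [hasInjectiveDimensionLT_iff]
  intro i hi Y e
  obtain ⟨g, hg, rfl⟩ := I.extMk_surjective e (i + 1) rfl
  have : g = 0 := (h i (by omega)).eq_of_tgt _ _
  subst this
  simp

theorem InjRes.splice {S : ShortComplex C} (hS : S.ShortExact) [Injective S.X₂]
    (I : InjectiveResolution S.X₃) (n : ℕ)
    (h : ∀ i : ℕ, n < i → IsZero (I.cocomplex.X i)) :
    ∃ J : InjectiveResolution S.X₁, ∀ i : ℕ, n + 1 < i → IsZero (J.cocomplex.X i) := by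
  have := hS.mono_f
  have := hS.epi_g
  let j : S.X₃ ⟶ I.cocomplex.X 0 := I.ι.f 0
  have hj : j ≫ I.cocomplex.d 0 1 = 0 := I.ι_f_zero_comp_complex_d
  have hmono : Mono j := inferInstanceAs (Mono (I.ι.f 0))
  have hex : (ShortComplex.mk j (I.cocomplex.d 0 1) hj).Exact := I.exact₀
  let K : CochainComplex C ℕ := I.cocomplex.augment (S.g ≫ j) (by simp [hj])
  have hinj : ∀ n, Injective (K.X n) := by
    rintro (_ | n)
    · exact inferInstanceAs (Injective S.X₂)
    · exact inferInstanceAs (Injective (I.cocomplex.X n))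
  have e0 : (ShortComplex.mk S.f (S.g ≫ j) (by simp)).Exact := by
    let α : S ⟶ ShortComplex.mk S.f (S.g ≫ j) (by simp) :=
      { τ₁ := 𝟙 _
        τ₂ := 𝟙 _
        τ₃ := j }
    have : Epi α.τ₁ := inferInstanceAs (Epi (𝟙 _))
    have : IsIso α.τ₂ := inferInstanceAs (IsIso (𝟙 _))
    have : Mono α.τ₃ := hmono
    exact (ShortComplex.exact_iff_of_epi_of_isIso_of_mono α).1 hS.exact
  have e1 : (ShortComplex.mk (S.g ≫ j) (I.cocomplex.d 0 1) (by simp [hj])).Exact := by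
    let α : ShortComplex.mk (S.g ≫ j) (I.cocomplex.d 0 1) (by simp [hj]) ⟶
        ShortComplex.mk j (I.cocomplex.d 0 1) hj :=
      { τ₁ := S.g
        τ₂ := 𝟙 _
        τ₃ := 𝟙 _ }
    have : Epi α.τ₁ := inferInstanceAs (Epi S.g)
    have : IsIso α.τ₂ := inferInstanceAs (IsIso (𝟙 _))
    have : Mono α.τ₃ := inferInstanceAs (Mono (𝟙 _))
    exact (ShortComplex.exact_iff_of_epi_of_isIso_of_mono α).2 hex
  have hexact : ∀ n, K.ExactAt (n + 1) := by
    intro n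
    rw [HomologicalComplex.exactAt_iff' _ n (n + 1) (n + 1 + 1) (by simp) (by simp)]
    match n with
    | 0 => exact e1
    | n + 1 => exact I.exact_succ n
  let ι : (CochainComplex.single₀ C).obj S.X₁ ⟶ K :=
    (CochainComplex.fromSingle₀Equiv K S.X₁).symm ⟨S.f, by
      change S.f ≫ S.g ≫ j = 0
      simp⟩
  have hι : ι.f 0 = S.f := CochainComplex.fromSingle₀Equiv_symm_apply_f_zero _ _
  refine ⟨{ cocomplex := K, injective := hinj, ι := ι, quasiIso := ⟨fun n => ?_⟩ }, ?_⟩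
  · cases n
    · rw [CochainComplex.quasiIsoAt₀_iff, ShortComplex.quasiIso_iff_of_zeros]
      · refine (ShortComplex.exact_and_mono_f_iff_of_iso ?_).2 ⟨e0, hS.mono_f⟩
        refine ShortComplex.isoMk (Iso.refl _) (Iso.refl _) (Iso.refl _) ?_ ?_
        · exact (Category.id_comp _).trans (hι.symm.trans (Category.comp_id _).symm)
        · exact (Category.id_comp _).trans (Category.comp_id _).symm
      all_goals rfl
    · rw [quasiIsoAt_iff_exactAt]
      · apply hexact
      · apply CochainComplex.exactAt_succ_single_obj
  · rintro (_ | i) hi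
    · omega
    · exact h i (by omega)

theorem InjRes.exists_of_hasInjDim [EnoughInjectives C] (n : ℕ) :
    ∀ (Z : C), HasInjectiveDimensionLT Z (n + 1) →
    ∃ J : InjectiveResolution Z, ∀ i : ℕ, n < i → IsZero (J.cocomplex.X i) := by
  induction n with
  | zero =>
    intro Z hZ
    have : Injective Z := injective_iff_hasInjectiveDimensionLT_one.2 hZ
    refine ⟨InjectiveResolution.self Z, fun i hi => ?_⟩
    exact HomologicalComplex.isZero_single_obj_X _ _ _ _ (by omega)
  | succ n ih =>
    intro Z hZ
    obtain ⟨ip⟩ := EnoughInjectives.presentation Z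
    have hS := ip.shortExact_shortComplex
    have : Injective ip.shortComplex.X₂ := ip.injective
    obtain ⟨I, hI⟩ := ih _ ((hS.hasInjectiveDimensionLT_X₃_iff n this).2 hZ)
    exact InjRes.splice hS I n hI

theorem hasInjDim_map {D : Type*} [Category* D] [Abelian D] [EnoughInjectives C]
    (F : C ⥤ D) [F.PreservesZeroMorphisms]
    (hE : ∀ S : ShortComplex C, S.ShortExact → (S.map F).ShortExact)
    (hF : ∀ X : C, Injective X → Injective (F.obj X)) (n : ℕ) :
    ∀ Z : C, HasInjectiveDimensionLT Z (n + 1) →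
      HasInjectiveDimensionLT (F.obj Z) (n + 1) := by
  induction n with
  | zero =>
    intro Z hZ
    have := hF Z (injective_iff_hasInjectiveDimensionLT_one.2 hZ)
    exact injective_iff_hasInjectiveDimensionLT_one.1 this
  | succ n ih =>
    intro Z hZ
    obtain ⟨ip⟩ := EnoughInjectives.presentation Z
    have hS := ip.shortExact_shortComplex
    have : Injective ip.shortComplex.X₂ := ip.injective
    have h3 := ih _ ((hS.hasInjectiveDimensionLT_X₃_iff n this).2 hZ)
    have hS' := hE _ hS
    exact (hS'.hasInjectiveDimensionLT_X₃_iff n (hF _ this)).1 h3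

theorem exists_factor_sum {X Y : C} (n : ℕ) (hY : HasInjectiveDimensionLT Y n)
    {ι : Type*} (t : Finset ι) (p : ι → (X ⟶ Y)) (q : ι → (Y ⟶ X)) :
    ∃ (W : C) (_ : HasInjectiveDimensionLT W n) (i : X ⟶ W) (r : W ⟶ X),
      i ≫ r = ∑ s ∈ t, p s ≫ q s := by
  classical
  induction t using Finset.induction_on with
  | empty =>
    have := (isZero_zero C).hasInjectiveDimensionLT_zero
    exact ⟨_, @hasInjectiveDimensionLT_of_ge _ _ _ _ 0 n (by omega) this, 0, 0, by simp⟩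
  | insert a t ha ih =>
    obtain ⟨W, hW, i, r, h⟩ := ih
    refine ⟨Y ⊞ W, inferInstance, biprod.lift (p a) i, biprod.desc (q a) r, ?_⟩
    rw [biprod.lift_desc, h, Finset.sum_insert ha]

end Helpers

section Mods

variable (A B : Type u) [Ring A] [Ring B]

theorem restrict_shortExact (f : A →+* B) (S : ShortComplex (ModuleCat.{u} B))
    (hS : S.ShortExact) : (S.map (ModuleCat.restrictScalars.{u} f)).ShortExact := by
  refine ModuleCat.shortComplex_shortExact _ ?_ ?_ ?_
  · exact (ShortComplex.ShortExact.moduleCat_exact_iff_function_exact S).1 hS.exact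
  · exact hS.moduleCat_injective_f
  · exact hS.moduleCat_surjective_g

def evalChar (M : Type u) [AddCommGroup M] [Module B M] :
    M →ₗ[B] ((M →+ AddCircle (1 : ℚ)) → RightCharacter B B) where
  toFun x χ := (χ.comp (AddMonoidHom.flip (smulAddHom B M) x) : B →+ AddCircle (1 : ℚ))
  map_add' x y := by
    funext χ
    refine AddMonoidHom.ext fun b => ?_
    change χ (b • (x + y)) = χ (b • x) + χ (b • y)
    rw [smul_add, map_add]
  map_smul' c x := by
    funext χ
    refine AddMonoidHom.ext fun b => ?_
    change χ (b • (c • x)) = χ ((b * c) • x)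
    rw [mul_smul]

theorem evalChar_injective (M : Type u) [AddCommGroup M] [Module B M] :
    Function.Injective (evalChar B M) := by
  rw [injective_iff_map_eq_zero]
  intro x hx
  refine CharacterModule.eq_zero_of_character_apply fun c => ?_
  have h : (evalChar B M x c) (1 : B) = (0 : RightCharacter B B) (1 : B) := by
    rw [hx]; rfl
  have h' : c ((1 : B) • x) = 0 := h
  rwa [one_smul] at h'

theorem restrict_injective (f : A →+* B) [Module Aᵐᵒᵖ B]
    (hr : ∀ (a : A) (b : B), (MulOpposite.op a) • b = b * f a)
    (hflat : Module.Injective A (RightCharacter A B))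
    (M : Type u) [AddCommGroup M] [Module B M] [Module A M]
    (hM : ∀ (a : A) (x : M), a • x = f a • x)
    (hinj : Module.Injective B M) : Module.Injective A M := by
  obtain ⟨ρ, hρ⟩ := hinj.out (evalChar B M) (evalChar_injective B M) LinearMap.id
  -- the same maps, as `A`-linear maps
  let e : M →ₗ[A] ((M →+ AddCircle (1 : ℚ)) → RightCharacter A B) :=
    { toFun := fun x => evalChar B M x
      map_add' := fun x y => (evalChar B M).map_add x y
      map_smul' := fun a x => by
        funext χ
        refine AddMonoidHom.ext fun b => ?_
        change χ (b • (a • x)) = χ (((MulOpposite.op a) • b) • x)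
        rw [hr, hM, mul_smul] }
  let r : ((M →+ AddCircle (1 : ℚ)) → RightCharacter A B) →ₗ[A] M :=
    { toFun := fun x => ρ x
      map_add' := fun x y => ρ.map_add x y
      map_smul' := fun a x => by
        have : (a • x : (M →+ AddCircle (1 : ℚ)) → RightCharacter A B) =
            (f a • (show (M →+ AddCircle (1 : ℚ)) → RightCharacter B B from x) :
              (M →+ AddCircle (1 : ℚ)) → RightCharacter B B) := by
          funext χ
          refine AddMonoidHom.ext fun b => ?_
          change (x χ) ((MulOpposite.op a) • b) = (x χ) (b * f a)
          rw [hr]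
        refine (congrArg ρ this).trans ?_
        rw [map_smul]
        exact (hM _ _).symm }
  have hre : ∀ x, r (e x) = x := hρ
  refine ⟨fun X Y _ _ _ _ i hi g => ?_⟩
  choose h hh using fun χ : M →+ AddCircle (1 : ℚ) =>
    hflat.out i hi ((LinearMap.proj χ).comp (e.comp g))
  refine ⟨r.comp (LinearMap.pi h), fun x => ?_⟩
  have : LinearMap.pi h (i x) = e (g x) := by
    funext χ
    exact hh χ x
  rw [LinearMap.comp_apply, this, hre]

noncomputable def restrictIso (f : A →+* B) [Module A B] (hl : ∀ (a : A) (b : B), a • b = f a * b) :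
    (ModuleCat.restrictScalars.{u} f).obj (ModuleCat.of B B) ≅ ModuleCat.of A B where
  hom := ModuleCat.ofHom (X := (ModuleCat.restrictScalars.{u} f).obj (ModuleCat.of B B)) (Y := B)
    { toFun := fun b => b
      map_add' := fun _ _ => rfl
      map_smul' := fun a b => (hl a b).symm }
  inv := ModuleCat.ofHom (X := B) (Y := (ModuleCat.restrictScalars.{u} f).obj (ModuleCat.of B B))
    { toFun := fun b => b
      map_add' := fun _ _ => rfl
      map_smul' := fun a b => hl a b }
  hom_inv_id := rfl
  inv_hom_id := rfl

end Mods

theorem stmt_2 (k : Type u) [Field k] (A B : Type u) [Ring A] [Ring B]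
    [Algebra k A] [Algebra k B]
    (f : A →ₐ[k] B) (hf : Function.Injective f)
    [Module A B] (hl : ∀ (a : A) (b : B), a • b = f a * b)
    [Module Aᵐᵒᵖ B] (hr : ∀ (a : A) (b : B), (MulOpposite.op a) • b = b * f a)
    -- `B = P ⊕ N` as left `A`-modules, with `P` projective and a generator:
    (hleft : ∃ P N : Submodule A B, IsCompl P N ∧ Module.Projective A P ∧
      ∀ (M : Type u) [AddCommGroup M] [Module A M],
        ∃ (ι : Type u) (g : (ι →₀ P) →ₗ[A] M), Function.Surjective g)
    -- `B = P ⊕ N` as right `A`-modules, with `P` projective and a generator: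
    (hright : ∃ P N : Submodule Aᵐᵒᵖ B, IsCompl P N ∧ Module.Projective Aᵐᵒᵖ P ∧
      ∀ (M : Type u) [AddCommGroup M] [Module Aᵐᵒᵖ M],
        ∃ (ι : Type u) (g : (ι →₀ P) →ₗ[Aᵐᵒᵖ] M), Function.Surjective g)
    -- `B` is flat as a right `A`-module:
    (hflat : Module.Injective A (RightCharacter A B)) :
    Ring.selfInjDim A ≤ Ring.selfInjDim B := by
  classical
  obtain ⟨P, N, hPN, -, hgen⟩ := hleft
  refine le_sInf ?_
  rintro n ⟨I, hI⟩
  induction n using ENat.recTopCoe with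
  | top => exact le_top
  | coe n =>
  have hB : HasInjectiveDimensionLT (ModuleCat.of B B) (n + 1) :=
    InjRes.hasInjDim I n fun i hi => hI i (by exact_mod_cast hi)
  have hres := hasInjDim_map (ModuleCat.restrictScalars.{u} f.toRingHom)
    (restrict_shortExact A B f.toRingHom)
    (fun X hX => by
      have h1 : Module.Injective B X := Module.injective_module_of_injective_object B X
      let : Module A X := Module.compHom X f.toRingHom
      have h2 : Module.Injective A X :=
        restrict_injective A B f.toRingHom hr hflat X (fun a x => rfl) h1
      exact (Module.injective_iff_injective_object A X).1 h2) n _ hB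
  -- `B` as an `A`-module
  let e : (ModuleCat.restrictScalars.{u} f.toRingHom).obj (ModuleCat.of B B) ≅ ModuleCat.of A B :=
    restrictIso A B f.toRingHom hl
  have hBA : HasInjectiveDimensionLT (ModuleCat.of A B) (n + 1) :=
    hasInjectiveDimensionLT_of_iso e (n + 1)
  obtain ⟨ι, g, hg⟩ := hgen A
  obtain ⟨x, hx⟩ := hg 1
  let pr : B →ₗ[A] P := P.projectionOnto N hPN
  obtain ⟨W, hW, i, r, hir⟩ := exists_factor_sum (X := ModuleCat.of A A) (n + 1) hBA x.support
    (fun s => ModuleCat.ofHom (LinearMap.toSpanSingleton A B (x s : B)))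
    (fun s => ModuleCat.ofHom (g.comp ((Finsupp.lsingle s).comp pr)))
  have hid : i ≫ r = 𝟙 _ := by
    rw [hir]
    ext
    simp [pr]
    rw [← map_sum]
    exact (congrArg g x.sum_single).trans hx
  have hA : HasInjectiveDimensionLT (ModuleCat.of A A) (n + 1) :=
    (Retract.mk i r hid).hasInjectiveDimensionLT (n + 1)
  obtain ⟨J, hJ⟩ := InjRes.exists_of_hasInjDim n _ hA
  exact sInf_le ⟨J, fun i hi => hJ i (by exact_mod_cast hi)⟩
end

section
/- Let B be a division k-algebra and let n ≥ 1. Then htr(M_n(B)) = htr(B): the injective dimension of M_n(B) ⊗_k M_n(B)^op as a left module over itself equals the injective dimension of B ⊗_k B^op as a left module over itself. (Consequently htr is invariant under Morita equivalence of simple artinian k-algebras.) -/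
open CategoryTheory Limits TensorProduct

universe u

section Aux

variable {C : Type*} [Category C] [Abelian C]

lemma aux_of_res {X : C} (I : InjectiveResolution X) (m : ℕ)
    (h : ∀ i : ℕ, m < i → IsZero (I.cocomplex.X i)) : HasInjectiveDimensionLE X m := by
  let := HasExt.standard C
  refine HasInjectiveDimensionLT.mk (fun i hi Y e ↦ ?_)
  obtain ⟨f, hf, rfl⟩ := I.extMk_surjective e (i + 1) rfl
  have h0 : f = 0 := (h i (by omega)).eq_of_tgt _ _
  subst h0
  simp

/-- splicing -/
lemma aux_splice {S : ShortComplex C} (hS : S.ShortExact) [Injective S.X₂]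
    (J : InjectiveResolution S.X₃) (m : ℕ)
    (h : ∀ i : ℕ, m < i → IsZero (J.cocomplex.X i)) :
    ∃ I : InjectiveResolution S.X₁, ∀ i : ℕ, m + 1 < i → IsZero (I.cocomplex.X i) := by
  have := hS.mono_f
  have := hS.epi_g
  obtain ⟨g, wg, hg, eg⟩ : ∃ (g : S.X₃ ⟶ J.cocomplex.X 0) (wg : g ≫ J.cocomplex.d 0 1 = 0),
      Mono g ∧ (ShortComplex.mk _ _ wg).Exact :=
    ⟨J.ι.f 0, J.ι_f_zero_comp_complex_d, inferInstanceAs (Mono (J.ι.f 0)), J.exact₀⟩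
  have w : (S.g ≫ g) ≫ J.cocomplex.d 0 1 = 0 := by
    rw [Category.assoc, wg, comp_zero]
  let K := CochainComplex.augment J.cocomplex (S.g ≫ g) w
  have w0 : S.f ≫ K.d 0 1 = 0 := by
    change S.f ≫ S.g ≫ g = 0
    rw [S.zero_assoc, zero_comp]
  have e0 : (ShortComplex.mk S.f (K.d 0 1) w0).Exact := by
    let α : S ⟶ ShortComplex.mk S.f (K.d 0 1) w0 :=
      { τ₁ := 𝟙 _
        τ₂ := 𝟙 _
        τ₃ := g
        comm₁₂ := by simp
        comm₂₃ := by simp [K] }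
    have : Mono α.τ₃ := hg
    have : Epi α.τ₁ := inferInstanceAs (Epi (𝟙 _))
    have : IsIso α.τ₂ := inferInstanceAs (IsIso (𝟙 _))
    exact (ShortComplex.exact_iff_of_epi_of_isIso_of_mono α).1 hS.exact
  have e1 : (ShortComplex.mk _ _ w).Exact := by
    let α : ShortComplex.mk _ _ w ⟶ ShortComplex.mk _ _ wg :=
      { τ₁ := S.g
        τ₂ := 𝟙 _
        τ₃ := 𝟙 _
        comm₁₂ := by simp
        comm₂₃ := by simp }
    have : Mono α.τ₃ := inferInstanceAs (Mono (𝟙 _))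
    have : Epi α.τ₁ := inferInstanceAs (Epi S.g)
    have : IsIso α.τ₂ := inferInstanceAs (IsIso (𝟙 _))
    exact (ShortComplex.exact_iff_of_epi_of_isIso_of_mono α).2 eg
  have eK : ∀ n, K.ExactAt (n + 1) := by
    intro n
    rw [HomologicalComplex.exactAt_iff' _ n (n + 1) (n + 1 + 1) (by simp) (by simp)]
    cases n with
    | zero => exact e1
    | succ n => exact J.exact_succ n
  let I : InjectiveResolution S.X₁ :=
    { cocomplex := K
      injective := fun n ↦ by
        cases n with
        | zero => exact inferInstanceAs (Injective S.X₂)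
        | succ n => exact J.injective n
      ι := (CochainComplex.fromSingle₀Equiv _ _).symm ⟨S.f, w0⟩
      quasiIso := ⟨fun n => by
        cases n
        · rw [CochainComplex.quasiIsoAt₀_iff, ShortComplex.quasiIso_iff_of_zeros]
          · refine (ShortComplex.exact_and_mono_f_iff_of_iso ?_).2
              ⟨e0, by dsimp; infer_instance⟩
            exact ShortComplex.isoMk (Iso.refl _) (Iso.refl _) (Iso.refl _)
              ((Category.id_comp _).trans
                ((CochainComplex.fromSingle₀Equiv_symm_apply_f_zero (C := K) S.f w0).symm.trans
                  (Category.comp_id _).symm))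
              ((Category.id_comp _).trans (Category.comp_id _).symm)
          all_goals rfl
        · rw [quasiIsoAt_iff_exactAt]
          · apply eK
          · apply CochainComplex.exactAt_succ_single_obj⟩ }
  refine ⟨I, fun i hi ↦ ?_⟩
  obtain _ | i := i
  · omega
  · exact h i (by omega)

lemma aux_res [EnoughInjectives C] (m : ℕ) : ∀ (X : C), HasInjectiveDimensionLE X m →
    ∃ I : InjectiveResolution X, ∀ i : ℕ, m < i → IsZero (I.cocomplex.X i) := by
  induction m with
  | zero =>
    intro X hX
    have : Injective X := injective_iff_hasInjectiveDimensionLT_one.2 hX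
    refine ⟨InjectiveResolution.self X, fun i hi ↦ ?_⟩
    exact HomologicalComplex.isZero_single_obj_X _ _ _ _ (by omega)
  | succ m ih =>
    intro X hX
    obtain ⟨ip⟩ := EnoughInjectives.presentation X
    have hS := InjectivePresentation.shortExact_shortComplex ip
    obtain ⟨J, hJ⟩ := ih _ ((hS.hasInjectiveDimensionLT_X₃_iff m ip.injective).2 hX)
    have : Injective ip.shortComplex.X₂ := ip.injective
    exact aux_splice hS J m hJ

lemma aux_iff [EnoughInjectives C] (m : ℕ) (X : C) :
    (∃ I : InjectiveResolution X, ∀ i : ℕ, m < i → IsZero (I.cocomplex.X i)) ↔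
      HasInjectiveDimensionLE X m :=
  ⟨fun ⟨I, hI⟩ ↦ aux_of_res I m hI, aux_res m X⟩

lemma aux_equiv {D : Type*} [Category D] [Abelian D] [EnoughInjectives C] (F : C ≌ D) (m : ℕ) :
    ∀ X : C, HasInjectiveDimensionLE X m ↔ HasInjectiveDimensionLE (F.functor.obj X) m := by
  have : F.functor.Additive := F.functor.additive_of_preserves_binary_products
  induction m with
  | zero =>
    intro X
    simp only [HasInjectiveDimensionLE, zero_add, ← injective_iff_hasInjectiveDimensionLT_one]
    exact (F.map_injective_iff X).symm
  | succ m ih =>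
    intro X
    obtain ⟨ip⟩ := EnoughInjectives.presentation X
    have hI := ip.injective
    have hS := InjectivePresentation.shortExact_shortComplex ip
    have hS' := hS.map_of_exact F.functor
    have hI' := (F.map_injective_iff _).2 hI
    exact (hS.hasInjectiveDimensionLT_X₃_iff m hI).symm.trans
      ((ih _).trans (hS'.hasInjectiveDimensionLT_X₃_iff m hI'))

end Aux

lemma aux_injDim_eq {R S : Type u} [Ring R] [Ring S] (M : ModuleCat.{u} R) (N : ModuleCat.{u} S)
    (h : ∀ m : ℕ, HasInjectiveDimensionLE M m ↔ HasInjectiveDimensionLE N m) :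
    M.injDim = N.injDim := by
  unfold ModuleCat.injDim
  congr 1
  ext n
  induction n with
  | top =>
    exact ⟨fun _ ↦ ⟨InjectiveResolution.of N, fun i hi ↦ by simp at hi⟩,
      fun _ ↦ ⟨InjectiveResolution.of M, fun i hi ↦ by simp at hi⟩⟩
  | coe m =>
    simp only [Set.mem_ofPred_eq, Nat.cast_lt]
    rw [aux_iff, aux_iff, h]

lemma aux_fin {R : Type u} [Ring R] (m : ℕ)
    (h : HasInjectiveDimensionLE (ModuleCat.of R R) m) (q : ℕ) :
    HasInjectiveDimensionLE (ModuleCat.of R (Fin q → R)) m := by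
  induction q with
  | zero =>
    have : HasInjectiveDimensionLT (ModuleCat.of R (Fin 0 → R)) 0 :=
      (hasInjectiveDimensionLT_zero_iff_isZero _).2 (ModuleCat.isZero_of_subsingleton _)
    exact hasInjectiveDimensionLT_of_ge _ 0 _ (by omega)
  | succ q ih =>
    have e : (ModuleCat.of R R) ⊞ (ModuleCat.of R (Fin q → R)) ≅
        ModuleCat.of R (Fin (q + 1) → R) :=
      ModuleCat.biprodIsoProd _ _ ≪≫ (Fin.consLinearEquiv R (fun _ : Fin (q + 1) ↦ R)).toModuleIso
    have : HasInjectiveDimensionLT ((ModuleCat.of R R) ⊞ (ModuleCat.of R (Fin q → R))) (m + 1) :=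
      inferInstance
    exact hasInjectiveDimensionLT_of_iso e _

lemma aux_pi {R : Type u} [Ring R] (m : ℕ) (ι : Type) [Fintype ι] [DecidableEq ι] (i : ι) :
    HasInjectiveDimensionLE (ModuleCat.of R R) m ↔
    HasInjectiveDimensionLE (ModuleCat.of R (ι → R)) m := by
  constructor
  · intro h
    have := aux_fin m h (Fintype.card ι)
    exact hasInjectiveDimensionLT_of_iso
      (LinearEquiv.funCongrLeft R R (Fintype.equivFin ι)).toModuleIso _
  · intro h
    let r : Retract (ModuleCat.of R R) (ModuleCat.of R (ι → R)) :=
      { i := ModuleCat.ofHom (LinearMap.single R (fun _ ↦ R) i)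
        r := ModuleCat.ofHom (LinearMap.proj i)
        retract := by ext; simp }
    exact r.hasInjectiveDimensionLT _

lemma aux_matrix {R : Type u} [Ring R] (m : ℕ) (ι : Type) [Fintype ι] [DecidableEq ι] (i : ι) :
    HasInjectiveDimensionLE (ModuleCat.of R R) m ↔
    HasInjectiveDimensionLE (ModuleCat.of (Matrix ι ι R) (Matrix ι ι R)) m := by
  rw [aux_pi m ι i, aux_equiv (ModuleCat.matrixEquivalence R i) m]
  let eLin : ((ModuleCat.matrixEquivalence R i).functor.obj (ModuleCat.of R (ι → R))) ≃ₗ[Matrix ι ι R]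
      (ModuleCat.of (Matrix ι ι R) (Matrix ι ι R)) :=
    { toFun := fun v ↦ Matrix.of v
      invFun := fun v ↦ v
      left_inv := fun _ ↦ rfl
      right_inv := fun _ ↦ rfl
      map_add' := fun _ _ ↦ rfl
      map_smul' := fun A v ↦ by
        ext a b
        exact Finset.sum_apply b _ _ }
  let e := eLin.toModuleIso
  exact ⟨fun _ ↦ hasInjectiveDimensionLT_of_iso e _,
    fun _ ↦ hasInjectiveDimensionLT_of_iso e.symm _⟩

lemma aux_ringEquiv {R S : Type u} [Ring R] [Ring S] (e : R ≃+* S) (m : ℕ) :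
    HasInjectiveDimensionLE (ModuleCat.of R R) m ↔
    HasInjectiveDimensionLE (ModuleCat.of S S) m :=
  haveI := RingHomInvPair.of_ringEquiv e
  haveI := RingHomInvPair.of_ringEquiv e.symm
  ModuleCat.hasInjectiveDimensionLE_iff_of_semiLinearEquiv (M := ModuleCat.of R R)
    (N := ModuleCat.of S S) e
    { e with map_smul' := fun a b ↦ map_mul e a b } m

theorem stmt_4 (k : Type u) [Field k] (B : Type u) [DivisionRing B] [Algebra k B]
    (n : ℕ) (hn : 1 ≤ n) :
    Ring.selfInjDim (Matrix (Fin n) (Fin n) B ⊗[k] (Matrix (Fin n) (Fin n) B)ᵐᵒᵖ) =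
      Ring.selfInjDim (B ⊗[k] Bᵐᵒᵖ) := by
  refine aux_injDim_eq _ _ (fun m ↦ ?_)
  let i : Fin n := ⟨0, hn⟩
  rw [aux_matrix (R := B ⊗[k] Bᵐᵒᵖ) m (Fin n × Fin n) (i, i)]
  refine aux_ringEquiv (AlgEquiv.toRingEquiv (R := k) ?_) m
  exact (Algebra.TensorProduct.congr AlgEquiv.refl AlgEquiv.mopMatrix.symm).trans
    (Matrix.kroneckerTMulAlgEquiv (Fin n) (Fin n) k k B Bᵐᵒᵖ)
end

section
/- Let D ⊆ Q be simple artinian k-algebras such that Q is finitely generated as a left D-module or as a right D-module. Then htr D = htr Q, i.e., the injective dimensions of D ⊗_k D^op and of Q ⊗_k Q^op, each as a left module over itself, are equal. -/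
open CategoryTheory Limits TensorProduct

universe u

namespace HtrAux

section Splice
universe v w
variable {C : Type w} [Category.{v} C] [Abelian C]

theorem splice_exact {M I N J : C} {f : M ⟶ I} {g : I ⟶ N} {w : f ≫ g = 0}
    (h : (ShortComplex.mk f g w).Exact) (j : N ⟶ J) [Mono j] :
    (ShortComplex.mk f (g ≫ j) (by rw [← Category.assoc, w, zero_comp])).Exact := by
  let α : ShortComplex.mk f g w ⟶
      ShortComplex.mk f (g ≫ j) (by rw [← Category.assoc, w, zero_comp]) :=
    { τ₁ := 𝟙 _
      τ₂ := 𝟙 _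
      τ₃ := j }
  have : Epi α.τ₁ := by dsimp [α]; infer_instance
  have : IsIso α.τ₂ := by dsimp [α]; infer_instance
  have : Mono α.τ₃ := by dsimp [α]; infer_instance
  exact (ShortComplex.exact_iff_of_epi_of_isIso_of_mono α).1 h

theorem splice_exact' {I N J K : C} {g : I ⟶ N} [Epi g] {j : N ⟶ J} {d : J ⟶ K} {w : j ≫ d = 0}
    (h : (ShortComplex.mk j d w).Exact) :
    (ShortComplex.mk (g ≫ j) d (by rw [Category.assoc, w, comp_zero])).Exact := by
  let α : ShortComplex.mk (g ≫ j) d (by rw [Category.assoc, w, comp_zero]) ⟶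
      ShortComplex.mk j d w :=
    { τ₁ := g
      τ₂ := 𝟙 _
      τ₃ := 𝟙 _ }
  have : Epi α.τ₁ := by dsimp [α]; infer_instance
  have : IsIso α.τ₂ := by dsimp [α]; infer_instance
  have : Mono α.τ₃ := by dsimp [α]; infer_instance
  exact (ShortComplex.exact_iff_of_epi_of_isIso_of_mono α).2 h

/-- The degree zero part of the augmentation of an injective resolution. -/
noncomputable def aug {N : C} (J : InjectiveResolution N) : N ⟶ J.cocomplex.X 0 := J.ι.f 0

theorem aug_comp {N : C} (J : InjectiveResolution N) : aug J ≫ J.cocomplex.d 0 1 = 0 :=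
  J.ι_f_zero_comp_complex_d

theorem aug_exact {N : C} (J : InjectiveResolution N) :
    (ShortComplex.mk (aug J) (J.cocomplex.d 0 1) (aug_comp J)).Exact :=
  ShortComplex.exact_of_f_is_kernel _ J.isLimitKernelFork

instance aug_mono {N : C} (J : InjectiveResolution N) : Mono (aug J) :=
  inferInstanceAs (Mono (J.ι.f 0))

/-- Splicing an injective resolution. -/
theorem exists_splice {M I N : C} {f : M ⟶ I} {g : I ⟶ N} {w : f ≫ g = 0}
    (h : (ShortComplex.mk f g w).ShortExact) [hI : Injective I] (J : InjectiveResolution N) (n : ℕ)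
    (hJ : ∀ i, n < i → IsZero (J.cocomplex.X i)) :
    ∃ I' : InjectiveResolution M, ∀ i, n + 1 < i → IsZero (I'.cocomplex.X i) := by
  have hmf : Mono f := h.mono_f
  have hmg : Epi g := h.epi_g
  have w1 : (g ≫ aug J) ≫ J.cocomplex.d 0 1 = 0 := by
    rw [Category.assoc, aug_comp, comp_zero]
  let K : CochainComplex C ℕ := J.cocomplex.augment (g ≫ aug J) w1
  have hK01 : K.d 0 1 = g ≫ aug J := rfl
  have hex : ∀ n, K.ExactAt (n + 1) := by
    intro n
    rw [HomologicalComplex.exactAt_iff' _ n (n + 1) (n + 1 + 1) (by simp) (by simp)]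
    cases n with
    | zero => exact splice_exact' (g := g) (aug_exact J)
    | succ n => exact J.exact_succ n
  have hf0 : f ≫ K.d 0 1 = 0 := by
    have e : f ≫ (g ≫ aug J) = 0 := by rw [← Category.assoc, w, zero_comp]
    exact e
  have hι : ((CochainComplex.fromSingle₀Equiv K M).symm ⟨f, hf0⟩).f 0 = f := by
    exact CochainComplex.fromSingle₀Equiv_symm_apply_f_zero (C := K) f hf0
  refine ⟨{ cocomplex := K, injective := ?_, ι := (CochainComplex.fromSingle₀Equiv _ _).symm ⟨f, hf0⟩, quasiIso := ⟨fun n => ?_⟩ }, ?_⟩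
  · rintro (_ | i)
    · exact hI
    · exact J.injective i
  · cases n
    · rw [CochainComplex.quasiIsoAt₀_iff, ShortComplex.quasiIso_iff_of_zeros]
      · refine (ShortComplex.exact_and_mono_f_iff_of_iso ?_).2
          ⟨splice_exact h.exact (aug J), hmf⟩
        exact ShortComplex.isoMk (Iso.refl _) (Iso.refl _) (Iso.refl _) 
          ((Category.id_comp f).trans (hι.symm.trans (Category.comp_id _).symm))
          ((Category.id_comp (g ≫ aug J)).trans (Category.comp_id (g ≫ aug J)).symm)
      all_goals rfl
    · rw [quasiIsoAt_iff_exactAt]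
      · apply hex
      · apply CochainComplex.exactAt_succ_single_obj
  · rintro (_ | i) hi
    · omega
    · exact hJ i (by omega)

theorem exists_res [EnoughInjectives C] (n : ℕ) (M : C) (h : HasInjectiveDimensionLT M (n + 1)) :
    ∃ I : InjectiveResolution M, ∀ i : ℕ, n < i → IsZero (I.cocomplex.X i) := by
  induction n generalizing M with
  | zero =>
    have : Injective M := injective_iff_hasInjectiveDimensionLT_one.2 h
    refine ⟨InjectiveResolution.self M, fun i hi => ?_⟩
    exact HomologicalComplex.isZero_single_obj_X _ _ _ _ (by omega)
  | succ n ih =>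
    obtain ⟨ip⟩ := EnoughInjectives.presentation M
    have hs := ip.shortExact_shortComplex
    have := ip.injective
    obtain ⟨J, hJ⟩ := ih ip.shortComplex.X₃
      ((hs.hasInjectiveDimensionLT_X₃_iff n ip.injective).2 h)
    exact exists_splice hs J n hJ

theorem hasInjDim_of_res {M : C} (I : InjectiveResolution M) (n : ℕ)
    (h : ∀ i : ℕ, n < i → IsZero (I.cocomplex.X i)) : HasInjectiveDimensionLT M (n + 1) := by
  let := HasExt.standard C
  rw [hasInjectiveDimensionLT_iff]
  intro i hi Y e
  obtain ⟨f, hf, rfl⟩ := I.extMk_surjective e _ rfl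
  rw [I.extMk_eq_zero_iff _ _ _ _ (i-1) (by omega)]
  exact ⟨0, (h i (by omega)).eq_of_tgt _ _⟩

variable {D : Type*} [Category* D] [Abelian D]

theorem hasInjDim_map [EnoughInjectives C] (F : C ⥤ D) [F.PreservesZeroMorphisms]
    (hF : ∀ X : ShortComplex C, X.ShortExact → (X.map F).ShortExact) [F.PreservesInjectiveObjects] (n : ℕ) (M : C)
    (h : HasInjectiveDimensionLT M (n + 1)) : HasInjectiveDimensionLT (F.obj M) (n + 1) := by
  induction n generalizing M with
  | zero =>
    have : Injective M := injective_iff_hasInjectiveDimensionLT_one.2 h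
    exact injective_iff_hasInjectiveDimensionLT_one.1 (F.injective_obj M)
  | succ n ih =>
    obtain ⟨ip⟩ := EnoughInjectives.presentation M
    have hs := ip.shortExact_shortComplex
    have := ip.injective
    have h3 := ih ip.shortComplex.X₃ ((hs.hasInjectiveDimensionLT_X₃_iff n ip.injective).2 h)
    have hs' := hF _ hs
    exact (hs'.hasInjectiveDimensionLT_X₃_iff n (F.injective_obj ip.J)).1 h3

end Splice

theorem injDim_le_of {R S : Type u} [Ring R] [Ring S] (M : ModuleCat.{u} R) (N : ModuleCat.{u} S)
    (h : ∀ n : ℕ, HasInjectiveDimensionLT M (n + 1) → HasInjectiveDimensionLT N (n + 1)) :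
    N.injDim ≤ M.injDim := by
  apply le_sInf
  rintro n ⟨I, hI⟩
  induction n using ENat.recTopCoe with
  | top => exact le_top
  | coe n =>
    obtain ⟨J, hJ⟩ := exists_res n N (h n (hasInjDim_of_res I n fun i hi => hI i (by exact_mod_cast hi)))
    exact sInf_le ⟨J, fun i hi => hJ i (by exact_mod_cast hi)⟩

section Restrict
universe v w
variable {S T : Type u} [Ring S] [Ring T] (f : S →+* T) {ι : Type w} (e : ι → T)
  (φ : T →+ (ι →₀ S))

theorem baer_restrict (hφ : ∀ t s i, φ (t * f s) i = φ t i * s)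
    (he : ∀ t, (φ t).sum (fun i s => e i * f s) = t)
    {M : Type v} [AddCommGroup M] [Module T M] [Module S M]
    (hs : ∀ (s : S) (m : M), s • m = f s • m) (hM : Module.Baer T M) : Module.Baer S M := by
  classical
  intro J g
  let K : Ideal T := Ideal.span (f '' J)
  have hK : ∀ x ∈ K, ∀ a i, φ (a * x) i ∈ J := by
    intro x hx
    induction hx using Submodule.span_induction with
    | mem x h =>
      obtain ⟨j, hj, rfl⟩ := h
      intro a i
      rw [hφ]
      exact J.mul_mem_left _ hj
    | zero => intro a i; simp
    | add x y _ _ hx hy => intro a i; rw [mul_add, map_add]; exact J.add_mem (hx a i) (hy a i)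
    | smul b x _ hx => intro a i; rw [smul_eq_mul, ← mul_assoc]; exact hx _ _
  have hK1 : ∀ x ∈ K, ∀ i, φ x i ∈ J := fun x hx i => by simpa using hK x hx 1 i
  let G : S → M := fun s => if h : s ∈ J then g ⟨s, h⟩ else 0
  have G_mem : ∀ (s : S) (h : s ∈ J), G s = g ⟨s, h⟩ := fun s h => dif_pos h
  have G0 : G 0 = 0 := by
    rw [G_mem 0 J.zero_mem]
    exact map_zero g
  have Gadd : ∀ s ∈ J, ∀ s' ∈ J, G (s + s') = G s + G s' := by
    intro s h s' h'
    rw [G_mem s h, G_mem s' h', G_mem _ (J.add_mem h h'), ← map_add]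
    rfl
  have Gmul : ∀ (a : S), ∀ s ∈ J, G (a * s) = f a • G s := by
    intro a s h
    rw [G_mem s h, G_mem _ (J.mul_mem_left a h), ← hs, ← map_smul]
    rfl
  let h0 : T → M := fun x => ∑ i ∈ (φ x).support, e i • G (φ x i)
  have h0_eq : ∀ x (F : Finset ι), (φ x).support ⊆ F → h0 x = ∑ i ∈ F, e i • G (φ x i) := by
    intro x F hF
    refine Finset.sum_subset hF fun i _ hi => ?_
    rw [Finsupp.notMem_support_iff.1 hi, G0, smul_zero]
  have h0_add : ∀ x ∈ K, ∀ y ∈ K, h0 (x + y) = h0 x + h0 y := by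
    intro x hx y hy
    rw [h0_eq x ((φ x).support ∪ (φ y).support) Finset.subset_union_left,
      h0_eq y ((φ x).support ∪ (φ y).support) Finset.subset_union_right,
      h0_eq (x + y) ((φ x).support ∪ (φ y).support)
        (by rw [map_add]; exact Finsupp.support_add), ← Finset.sum_add_distrib]
    refine Finset.sum_congr rfl fun i _ => ?_
    rw [map_add, Finsupp.add_apply, Gadd _ (hK1 x hx i) _ (hK1 y hy i), smul_add]
  have h0_gen : ∀ (t : T), ∀ j ∈ J, h0 (t * f j) = t • G j := by
    intro t j hj
    rw [h0_eq (t * f j) (φ t).support]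
    · conv_rhs => rw [← he t, Finsupp.sum, Finset.sum_smul]
      refine Finset.sum_congr rfl fun i _ => ?_
      rw [hφ, Gmul _ _ hj, mul_smul]
    · intro i hi
      rw [Finsupp.mem_support_iff] at hi ⊢
      intro h
      rw [hφ, h, zero_mul] at hi
      exact hi rfl
  have h0_smul : ∀ x ∈ K, ∀ t, h0 (t * x) = t • h0 x := by
    intro x hx
    induction hx using Submodule.span_induction with
    | mem x h =>
      obtain ⟨j, hj, rfl⟩ := h
      intro t
      rw [h0_gen t j hj, ← one_mul (f j), h0_gen 1 j hj, one_smul]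
    | zero => intro t; simp [h0]
    | add x y h1 h2 hx hy =>
      intro t
      rw [mul_add, h0_add _ (K.mul_mem_left t h1) _ (K.mul_mem_left t h2), hx, hy, h0_add x h1 y h2,
        smul_add]
    | smul b x _ hx =>
      intro t
      rw [smul_eq_mul, ← mul_assoc, hx, hx, mul_smul]
  let h : K →ₗ[T] M :=
    { toFun := fun x => h0 x
      map_add' := fun x y => h0_add x x.2 y y.2
      map_smul' := fun t x => h0_smul x x.2 t }
  obtain ⟨h', hh'⟩ := hM K h
  refine ⟨{ toFun := fun s => h' (f s), map_add' := fun a b => by simp,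
            map_smul' := fun a b => ?_ }, ?_⟩
  · rw [smul_eq_mul, map_mul, RingHom.id_apply, hs, ← map_smul, smul_eq_mul]
  · intro j hj
    have h1 : f j ∈ K := Ideal.subset_span ⟨j, hj, rfl⟩
    have h2 := hh' (f j) h1
    change h' (f j) = _
    rw [h2]
    change h0 (f j) = _
    rw [← one_mul (f j), h0_gen 1 j hj, one_smul, G_mem j hj]

theorem restrict_exact (X : ShortComplex (ModuleCat.{u} T)) (hX : X.ShortExact) :
    (X.map (ModuleCat.restrictScalars f)).ShortExact := by
  have h1 := hX.moduleCat_injective_f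
  have h2 := hX.moduleCat_surjective_g
  have h3 := (ShortComplex.ShortExact.moduleCat_exact_iff_function_exact X).1 hX.exact
  exact ModuleCat.shortComplex_shortExact (X.map (ModuleCat.restrictScalars f)) h3 h1 h2

theorem selfInjDim_le_of_ringHom (hφ : ∀ t s i, φ (t * f s) i = φ t i * s)
    (he : ∀ t, (φ t).sum (fun i s => e i * f s) = t)
    (π : T →+ S) (hπ : ∀ s t, π (f s * t) = s * π t) (hπ1 : π 1 = 1) :
    Ring.selfInjDim S ≤ Ring.selfInjDim T := by
  refine injDim_le_of _ _ fun n h => ?_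
  have : (ModuleCat.restrictScalars.{u} f).PreservesInjectiveObjects :=
    ⟨fun {M} hM => by
      rw [← Module.injective_iff_injective_object] at hM ⊢
      let : Module T ((ModuleCat.restrictScalars f).obj M) := inferInstanceAs (Module T M)
      exact (baer_restrict f e φ hφ he (M := (ModuleCat.restrictScalars f).obj M)
        (fun s m => rfl) (Module.Baer.of_injective hM)).injective⟩
  have h1 := hasInjDim_map (ModuleCat.restrictScalars.{u} f) (restrict_exact f) n _ h
  suffices hr : Nonempty (Retract (ModuleCat.of S S)
      ((ModuleCat.restrictScalars f).obj (ModuleCat.of T T))) from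
    hr.some.hasInjectiveDimensionLT _
  let : Module S (ModuleCat.of T T) :=
    Module.compHom T f
  let i : S →ₗ[S] (ModuleCat.restrictScalars f).obj (ModuleCat.of T T) :=
    { toFun := fun s => f s
      map_add' := fun a b => map_add f a b
      map_smul' := fun a b => map_mul f a b }
  let r : (ModuleCat.restrictScalars f).obj (ModuleCat.of T T) →ₗ[S] S :=
    { toFun := fun t => π t
      map_add' := fun a b => map_add π a b
      map_smul' := fun a b => hπ a b }
  refine ⟨⟨ModuleCat.ofHom i, ModuleCat.ofHom r, ?_⟩⟩
  ext
  change π (f 1) = 1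
  rw [map_one, hπ1]

theorem selfInjDim_le_of_ringEquiv (g : S ≃+* T) : Ring.selfInjDim S ≤ Ring.selfInjDim T := by
  refine selfInjDim_le_of_ringHom (g : S →+* T) (fun _ : Unit => 1)
    ((Finsupp.singleAddHom ()).comp (g.symm : T →+ S)) ?_ ?_ (g.symm : T →+ S) ?_ ?_
  · intro t s i; simp
  · intro t; simp
  · intro t; simp
  · simp

end Restrict

section MatrixRing
variable (R : Type u) [Ring R] (ι : Type)

theorem baer_pi {M : Type u} [AddCommGroup M] [Module R M] (hM : Module.Baer R M) :
    Module.Baer R (ι → M) := by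
  intro J g
  choose h hh using fun i => hM J ((LinearMap.proj i).comp g)
  refine ⟨LinearMap.pi h, fun x hx => ?_⟩
  ext i
  exact hh i x hx

/-- The functor `M ↦ (ι → M)`. -/
def powFunctor : ModuleCat.{u} R ⥤ ModuleCat.{u} R where
  obj M := ModuleCat.of R (ι → M)
  map f := ModuleCat.ofHom (f.hom.compLeft ι)

instance : (powFunctor R ι).PreservesZeroMorphisms where
  map_zero _ _ := rfl

instance : (powFunctor R ι).PreservesInjectiveObjects where
  injective_obj {M} hM := by
    rw [← Module.injective_iff_injective_object] at hM
    exact (Module.injective_iff_injective_object R (ι → M)).1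
      (baer_pi R ι (Module.Baer.of_injective hM)).injective

theorem pi_exact {X Y Z : Type u} [AddCommGroup X] [AddCommGroup Y] [AddCommGroup Z] (f : X → Y)
    (g : Y → Z) (h : Function.Exact f g) :
    Function.Exact (fun v : ι → X => fun i => f (v i)) (fun v : ι → Y => fun i => g (v i)) := by
  intro y
  constructor
  · intro hy
    choose x hx using fun i => (h (y i)).1 (congrFun hy i)
    exact ⟨x, funext hx⟩
  · rintro ⟨x, rfl⟩
    ext i
    exact (h _).2 ⟨_, rfl⟩

theorem pow_exact (X : ShortComplex (ModuleCat.{u} R)) (hX : X.ShortExact) :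
    (X.map (powFunctor R ι)).ShortExact := by
  have h1 := hX.moduleCat_injective_f
  have h2 := hX.moduleCat_surjective_g
  have h3 := (ShortComplex.ShortExact.moduleCat_exact_iff_function_exact X).1 hX.exact
  exact ModuleCat.shortComplex_shortExact (X.map (powFunctor R ι)) (pi_exact ι _ _ h3)
    (h1.comp_left) (h2.comp_left)

variable [Fintype ι] [DecidableEq ι]

instance : (ModuleCat.toMatrixModCat.{u} R ι).PreservesZeroMorphisms where
  map_zero _ _ := rfl

theorem mat_exact (X : ShortComplex (ModuleCat.{u} R)) (hX : X.ShortExact) :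
    (X.map (ModuleCat.toMatrixModCat R ι)).ShortExact := by
  have h1 := hX.moduleCat_injective_f
  have h2 := hX.moduleCat_surjective_g
  have h3 := (ShortComplex.ShortExact.moduleCat_exact_iff_function_exact X).1 hX.exact
  exact ModuleCat.shortComplex_shortExact (X.map (ModuleCat.toMatrixModCat R ι)) (pi_exact ι _ _ h3)
    (h1.comp_left) (h2.comp_left)

theorem selfInjDim_matrix_le [Nonempty ι] :
    Ring.selfInjDim (Matrix ι ι R) ≤ Ring.selfInjDim R := by
  refine injDim_le_of _ _ fun n h => ?_
  have h1 := hasInjDim_map (powFunctor R ι) (pow_exact R ι) n _ h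
  obtain ⟨i0⟩ := ‹Nonempty ι›
  have : (ModuleCat.toMatrixModCat.{u} R ι).IsEquivalence :=
    (ModuleCat.matrixEquivalence R i0).isEquivalence_functor
  have h2 := hasInjDim_map (ModuleCat.toMatrixModCat.{u} R ι) (mat_exact R ι) n _ h1
  suffices hr : Nonempty (ModuleCat.of (Matrix ι ι R) (Matrix ι ι R) ≅
      (ModuleCat.toMatrixModCat R ι).obj ((powFunctor R ι).obj (ModuleCat.of R R))) from
    hasInjectiveDimensionLT_of_iso hr.some.symm _
  let e : Matrix ι ι R ≃ₗ[Matrix ι ι R]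
      (ModuleCat.toMatrixModCat R ι).obj ((powFunctor R ι).obj (ModuleCat.of R R)) :=
    { toFun := fun A => (A : ι → ι → R)
      invFun := fun A => (A : ι → ι → R)
      map_add' := fun _ _ => rfl
      map_smul' := fun A B => by
        change (A * B : Matrix ι ι R) = fun i => ∑ j, A i j • (B j : ι → R)
        ext i k
        simp [Matrix.mul_apply]
      left_inv := fun _ => rfl
      right_inv := fun _ => rfl }
  exact ⟨e.toModuleIso⟩

end MatrixRing

section Tensor
variable (k : Type u) [Field k]

theorem exists_dualBasis {A B : Type u} [Ring A] [Ring B] [Algebra k A] [Algebra k B]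
    [IsSemisimpleRing A] (f : A →ₐ[k] B) :
    ∃ (φ : B →ₗ[k] (B →₀ A)), (∀ t s i, φ (t * f s) i = φ t i * s) ∧
      (∀ t, Finsupp.lsum k (fun b : B => LinearMap.mulLeft k b ∘ₗ f.toLinearMap) (φ t) = t) := by
  let : Module Aᵐᵒᵖ B := Module.compHom B (f : A →+* B).op
  have hsm : ∀ (a : A) (b : B), MulOpposite.op a • b = b * f a := fun a b => rfl
  have hP : Module.Projective Aᵐᵒᵖ B := Module.projective_of_isSemisimpleRing Aᵐᵒᵖ B
  obtain ⟨s, hs⟩ := hP.out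
  let φ : B →ₗ[k] (B →₀ A) :=
    { toFun := fun b => (s b).mapRange MulOpposite.unop rfl
      map_add' := fun a b => by
        ext i
        simp
      map_smul' := fun c b => by
        have : c • b = MulOpposite.op (algebraMap k A c) • b := by
          rw [hsm, AlgHom.commutes, ← Algebra.commutes, Algebra.smul_def]
        ext i
        rw [this, map_smul]
        simp [Algebra.smul_def, Algebra.commutes] }
  refine ⟨φ, ?_, ?_⟩
  · intro t a i
    change (s (t * f a) i).unop = (s t i).unop * a
    rw [← hsm, map_smul]
    simp
  · intro t
    conv_rhs => rw [← hs t]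
    rw [Finsupp.lsum_apply, Finsupp.linearCombination_apply]
    change ((s t).mapRange MulOpposite.unop rfl).sum _ = _
    rw [Finsupp.sum_mapRange_index (by simp)]
    rfl

theorem exists_retraction {A B : Type u} [Ring A] [Ring B] [Algebra k A] [Algebra k B]
    [IsSemisimpleRing A] (f : A →ₐ[k] B) (hf : Function.Injective f) :
    ∃ π : B →ₗ[k] A, (∀ a b, π (f a * b) = a * π b) ∧ π 1 = 1 := by
  let : Module A B := Module.compHom B (f : A →+* B)
  have hsm : ∀ (a : A) (b : B), a • b = f a * b := fun a b => rfl
  let f' : A →ₗ[A] B :=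
    { toFun := f, map_add' := map_add f, map_smul' := fun a b => by simp [hsm] }
  obtain ⟨h, hh⟩ := IsSemisimpleModule.extension_property f' hf LinearMap.id
  refine ⟨{ toFun := h, map_add' := map_add h, map_smul' := fun c b => ?_ }, fun a b => ?_, ?_⟩
  · have : c • b = (algebraMap k A c) • b := by
      rw [hsm, AlgHom.commutes, Algebra.smul_def]
    rw [this, map_smul, smul_eq_mul, RingHom.id_apply, Algebra.smul_def]
  · change h (f a * b) = a * h b
    rw [← hsm, map_smul, smul_eq_mul]
  · change h 1 = 1
    have := LinearMap.congr_fun hh 1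
    simpa [f'] using this

theorem selfInjDim_tensor_le {A A' B B' : Type u} [Ring A] [Ring B] [Algebra k A] [Algebra k B]
    [Ring A'] [Ring B'] [Algebra k A'] [Algebra k B'] [IsSemisimpleRing A] [IsSemisimpleRing A']
    (f : A →ₐ[k] B) (f' : A' →ₐ[k] B') (hf : Function.Injective f) (hf' : Function.Injective f') :
    Ring.selfInjDim (A ⊗[k] A') ≤ Ring.selfInjDim (B ⊗[k] B') := by
  obtain ⟨φ, h1, h2⟩ := exists_dualBasis k f
  obtain ⟨φ', h1', h2'⟩ := exists_dualBasis k f'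
  obtain ⟨π, p1, p2⟩ := exists_retraction k f hf
  obtain ⟨π', p1', p2'⟩ := exists_retraction k f' hf'
  let F := Algebra.TensorProduct.map f f'
  let Φ : B ⊗[k] B' →ₗ[k] (B × B' →₀ A ⊗[k] A') :=
    (finsuppTensorFinsupp k k A A' B B').toLinearMap ∘ₗ TensorProduct.map φ φ'
  have hΦ : ∀ b b' i, Φ (b ⊗ₜ b') i = φ b i.1 ⊗ₜ φ' b' i.2 := by
    rintro b b' ⟨i, i'⟩
    exact finsuppTensorFinsupp_apply k k A A' B B' (φ b) (φ' b') i i'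
  refine selfInjDim_le_of_ringHom (F : A ⊗[k] A' →+* B ⊗[k] B')
    (fun p : B × B' => p.1 ⊗ₜ[k] p.2) (Φ : B ⊗[k] B' →+ (B × B' →₀ A ⊗[k] A')) ?_ ?_
    (TensorProduct.map π π' : B ⊗[k] B' →+ A ⊗[k] A') ?_ ?_
  · intro t s i
    change Φ (t * F s) i = Φ t i * s
    induction s using TensorProduct.induction_on with
    | zero => simp
    | add x y hx hy => simp only [map_add, mul_add, Finsupp.add_apply, hx, hy]
    | tmul a a' =>
      induction t using TensorProduct.induction_on with
      | zero => simp
      | add x y hx hy => simp only [map_add, add_mul, Finsupp.add_apply, hx, hy]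
      | tmul b b' =>
        rw [Algebra.TensorProduct.map_tmul, Algebra.TensorProduct.tmul_mul_tmul, hΦ, hΦ, h1, h1',
          Algebra.TensorProduct.tmul_mul_tmul]
  · intro t
    let L : (B × B' →₀ A ⊗[k] A') →ₗ[k] B ⊗[k] B' :=
      Finsupp.lsum k (fun p : B × B' => LinearMap.mulLeft k (p.1 ⊗ₜ[k] p.2) ∘ₗ F.toLinearMap)
    change L (Φ t) = t
    have hL : L ∘ₗ (finsuppTensorFinsupp k k A A' B B').toLinearMap = TensorProduct.map
        (Finsupp.lsum k (fun b : B => LinearMap.mulLeft k b ∘ₗ f.toLinearMap))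
        (Finsupp.lsum k (fun b : B' => LinearMap.mulLeft k b ∘ₗ f'.toLinearMap)) := by
      ext b a b' a'
      simp [L, F, finsuppTensorFinsupp_single]
    have hL' : L ∘ₗ Φ = LinearMap.id := by
      ext b b'
      change (L ∘ₗ (finsuppTensorFinsupp k k A A' B B').toLinearMap)
        (TensorProduct.map φ φ' (b ⊗ₜ b')) = b ⊗ₜ b'
      rw [hL, TensorProduct.map_tmul, TensorProduct.map_tmul, h2, h2']
    exact LinearMap.congr_fun hL' t
  · intro s t
    change TensorProduct.map π π' (F s * t) = s * TensorProduct.map π π' t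
    induction s using TensorProduct.induction_on with
    | zero => simp
    | add x y hx hy => simp only [map_add, add_mul, hx, hy]
    | tmul a a' =>
      induction t using TensorProduct.induction_on with
      | zero => simp
      | add x y hx hy => simp only [map_add, mul_add, hx, hy]
      | tmul b b' =>
        rw [Algebra.TensorProduct.map_tmul, Algebra.TensorProduct.tmul_mul_tmul,
          TensorProduct.map_tmul, TensorProduct.map_tmul, p1, p1',
          Algebra.TensorProduct.tmul_mul_tmul]
  · change TensorProduct.map π π' 1 = 1
    rw [Algebra.TensorProduct.one_def, TensorProduct.map_tmul, p2, p2',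
      Algebra.TensorProduct.one_def]

end Tensor

section Embed

theorem exists_pi_equiv (D V : Type u) [Ring D] [IsSimpleRing D] [IsArtinianRing D]
    [AddCommGroup V] [Module D V] [Module.Finite D V] [Nontrivial V] :
    ∃ r m : ℕ, r ≠ 0 ∧ m ≠ 0 ∧ Nonempty ((Fin r → V) ≃ₗ[D] (Fin m → D)) := by
  have h := IsSimpleRing.isIsotypic D (D × V)
  obtain ⟨n, hn, S, hS, ⟨e⟩⟩ := h.linearEquiv_fun
  have hT := h S
  have h1 : IsIsotypicOfType D D S :=
    hT.of_injective (LinearMap.inl D D V) LinearMap.inl_injective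
  have h2 : IsIsotypicOfType D V S :=
    hT.of_injective (LinearMap.inr D D V) LinearMap.inr_injective
  obtain ⟨r, ⟨e1⟩⟩ := h1.linearEquiv_fun
  obtain ⟨m, ⟨e2⟩⟩ := h2.linearEquiv_fun
  have hr : r ≠ 0 := by
    rintro rfl
    exact not_subsingleton D e1.toEquiv.subsingleton
  have hm : m ≠ 0 := by
    rintro rfl
    exact not_subsingleton V e2.toEquiv.subsingleton
  refine ⟨r, m, hr, hm, ⟨?_⟩⟩
  let c : (Fin r → Fin m → S) ≃ₗ[D] (Fin m → Fin r → S) :=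
    { toFun := fun f i j => f j i
      invFun := fun f i j => f j i
      map_add' := fun _ _ => rfl
      map_smul' := fun _ _ => rfl
      left_inv := fun _ => rfl
      right_inv := fun _ => rfl }
  exact (LinearEquiv.piCongrRight fun _ => e2).trans
    (c.trans (LinearEquiv.piCongrRight fun _ => e1.symm))

theorem exists_algHom_matrix (k : Type u) [Field k] (D V A : Type u) [Ring D] [Algebra k D]
    [IsSimpleRing D] [IsArtinianRing D] [AddCommGroup V] [Module D V] [Module.Finite D V]
    [Nontrivial V] [Module k V] [IsScalarTower k D V] [Ring A] [Algebra k A]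
    (ρ : A →ₐ[k] Module.End D V) :
    ∃ m : ℕ, m ≠ 0 ∧ Nonempty (A →ₐ[k] Matrix (Fin m) (Fin m) Dᵐᵒᵖ) := by
  obtain ⟨r, m, hr, hm, ⟨e⟩⟩ := exists_pi_equiv D V
  refine ⟨m, hm, ⟨?_⟩⟩
  let δ : Module.End D V →ₐ[k] Module.End D (Fin r → V) :=
    { toFun := fun g => g.compLeft (Fin r)
      map_one' := rfl
      map_mul' := fun _ _ => rfl
      map_zero' := rfl
      map_add' := fun _ _ => rfl
      commutes' := fun _ => rfl }
  let e1 : Module.End D (Fin r → V) ≃ₐ[k] Module.End D (Fin m → D) := e.conjAlgEquiv k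
  let e2 : Module.End D (Fin m → D) ≃ₐ[k] Matrix (Fin m) (Fin m) (Module.End D D) :=
    endVecAlgEquivMatrixEnd (Fin m) k D D
  let e3 : Matrix (Fin m) (Fin m) (Module.End D D) ≃ₐ[k] Matrix (Fin m) (Fin m) Dᵐᵒᵖ :=
    (AlgEquiv.moduleEndSelf k).symm.mapMatrix
  exact ((e1.trans (e2.trans e3)).toAlgHom).comp (δ.comp ρ)

theorem exists_both (k : Type u) [Field k] (D Q : Type u) [Ring D] [Ring Q]
    [Algebra k D] [Algebra k Q]
    [IsSimpleRing D] [IsArtinianRing D] [IsSimpleRing Q] (f : D →ₐ[k] Q)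
    [Module D Q] (hl : ∀ (d : D) (q : Q), d • q = f d * q)
    [Module Dᵐᵒᵖ Q] (hr : ∀ (d : D) (q : Q), (MulOpposite.op d) • q = q * f d)
    (hfin : Module.Finite D Q ∨ Module.Finite Dᵐᵒᵖ Q) :
    ∃ m : ℕ, m ≠ 0 ∧ Nonempty (Q →ₐ[k] Matrix (Fin m) (Fin m) D) ∧
      Nonempty (Qᵐᵒᵖ →ₐ[k] Matrix (Fin m) (Fin m) Dᵐᵒᵖ) := by
  rcases hfin with hfin | hfin
  · have : IsScalarTower k D Q := ⟨fun c d q => by simp [hl]⟩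
    let ρ : Qᵐᵒᵖ →ₐ[k] Module.End D Q :=
      { toFun := fun q =>
          { toFun := fun x => x * q.unop
            map_add' := fun x y => add_mul _ _ _
            map_smul' := fun d x => by simp [hl, mul_assoc] }
        map_one' := by ext; simp
        map_mul' := fun x y => by ext; simp [mul_assoc]
        map_zero' := by ext; simp
        map_add' := fun x y => by ext; simp [mul_add]
        commutes' := fun c => by
          ext x
          simp [Algebra.smul_def, Algebra.commutes] }
    obtain ⟨m, hm, ⟨g⟩⟩ := exists_algHom_matrix k D Q Qᵐᵒᵖ ρ
    refine ⟨m, hm, ⟨?_⟩, ⟨g⟩⟩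
    let g' : Qᵐᵒᵖ →ₐ[k] (Matrix (Fin m) (Fin m) D)ᵐᵒᵖ :=
      ((AlgEquiv.mopMatrix : Matrix (Fin m) (Fin m) Dᵐᵒᵖ ≃ₐ[k] _) : _ →ₐ[k] _).comp g
    exact AlgHom.op.symm g'
  · have : IsScalarTower k Dᵐᵒᵖ Q := ⟨fun c d q => by
      induction d using MulOpposite.rec' with
      | _ d => rw [← MulOpposite.op_smul, hr, hr]; simp⟩
    have : IsArtinianRing Dᵐᵒᵖ :=
      IsSimpleRing.isSemisimpleRing_iff_isArtinianRing.1 inferInstance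
    let ρ : Q →ₐ[k] Module.End Dᵐᵒᵖ Q :=
      { toFun := fun q =>
          { toFun := fun x => q * x
            map_add' := fun x y => mul_add _ _ _
            map_smul' := fun d x => by
              induction d using MulOpposite.rec' with
              | _ d => simp [hr, mul_assoc] }
        map_one' := by ext; simp
        map_mul' := fun x y => by ext; simp [mul_assoc]
        map_zero' := by ext; simp
        map_add' := fun x y => by ext; simp [add_mul]
        commutes' := fun c => by
          ext x
          simp [Algebra.smul_def] }
    obtain ⟨m, hm, ⟨g⟩⟩ := exists_algHom_matrix k Dᵐᵒᵖ Q Q ρ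
    let g₁ : Q →ₐ[k] Matrix (Fin m) (Fin m) D :=
      (AlgEquiv.opOp k D).symm.mapMatrix.toAlgHom.comp g
    refine ⟨m, hm, ⟨g₁⟩, ⟨?_⟩⟩
    exact ((AlgEquiv.mopMatrix : Matrix (Fin m) (Fin m) Dᵐᵒᵖ ≃ₐ[k] _).symm : _ →ₐ[k] _).comp
      (AlgHom.op g₁)

end Embed

end HtrAux

/-!
Statement 5 (Proposition 1.5(c)): if `D ⊆ Q` are simple artinian `k`-algebras and `Q` is
finitely generated as a left `D`-module (for the action `d • q = f d * q`) or as a right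
`D`-module (for the action `dᵒᵖ • q = q * f d`), then `htr D = htr Q`.
-/

theorem stmt_5 (k : Type u) [Field k] (D Q : Type u) [Ring D] [Ring Q]
    [Algebra k D] [Algebra k Q]
    [IsSimpleRing D] [IsArtinianRing D] [IsSimpleRing Q] [IsArtinianRing Q]
    (f : D →ₐ[k] Q) (hf : Function.Injective f)
    [Module D Q] (hl : ∀ (d : D) (q : Q), d • q = f d * q)
    [Module Dᵐᵒᵖ Q] (hr : ∀ (d : D) (q : Q), (MulOpposite.op d) • q = q * f d)
    (hfin : Module.Finite D Q ∨ Module.Finite Dᵐᵒᵖ Q) :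
    Ring.selfInjDim (D ⊗[k] Dᵐᵒᵖ) = Ring.selfInjDim (Q ⊗[k] Qᵐᵒᵖ) := by
  have hsD : IsSemisimpleRing D := inferInstance
  have hsQ : IsSemisimpleRing Q := inferInstance
  apply le_antisymm
  · refine HtrAux.selfInjDim_tensor_le k f (AlgHom.op f) hf ?_
    intro x y h
    exact MulOpposite.unop_injective (hf (MulOpposite.op_injective h))
  · obtain ⟨m, hm, ⟨g⟩, ⟨g'⟩⟩ := HtrAux.exists_both k D Q f hl hr hfin
    have : NeZero m := ⟨hm⟩
    have hg : Function.Injective g := (g : Q →+* Matrix (Fin m) (Fin m) D).injective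
    have hg' : Function.Injective g' := (g' : Qᵐᵒᵖ →+* Matrix (Fin m) (Fin m) Dᵐᵒᵖ).injective
    exact (HtrAux.selfInjDim_tensor_le k g g' hg hg').trans
      ((HtrAux.selfInjDim_le_of_ringEquiv
        (Matrix.kroneckerTMulAlgEquiv (Fin m) (Fin m) k k D Dᵐᵒᵖ).toRingEquiv).trans
        (HtrAux.selfInjDim_matrix_le (D ⊗[k] Dᵐᵒᵖ) (Fin m × Fin m)))
end

section
/- Let D ⊆ Q be simple artinian k-algebras and let U be any division k-algebra. Then the injective dimension of D ⊗_k U as a left module over itself is at most the injective dimension of Q ⊗_k U as a left module over itself. (Hence shtr D ≤ shtr Q, where shtr S := sup over division k-algebras U of injdim(S ⊗_k U).) -/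
open CategoryTheory Limits TensorProduct

universe u

theorem aux_lt_of_resolution {R : Type u} [Ring R] {M : ModuleCat.{u} R} (n : ℕ)
    (I : InjectiveResolution M) (h : ∀ i : ℕ, n < i → IsZero (I.cocomplex.X i)) :
    HasInjectiveDimensionLT M (n + 1) := by
  rw [hasInjectiveDimensionLT_iff]
  intro i hi Y e
  obtain ⟨f, hf, rfl⟩ := I.extMk_surjective e (i + 1) rfl
  obtain rfl : f = 0 := (h i hi).eq_of_tgt _ _
  exact I.extMk_zero _ _

/-- Splice a monomorphism into an injective object with a resolution of the cokernel. -/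
noncomputable def auxSplice {C : Type*} [Category C] [Abelian C] (S : ShortComplex C)
    (hS : S.ShortExact) (hI : Injective S.X₂) (K : CochainComplex C ℕ)
    (hK : ∀ n, Injective (K.X n)) (j : S.X₃ ⟶ K.X 0) (w : j ≫ K.d 0 1 = 0) (hj : Mono j)
    (ex₀ : (ShortComplex.mk j (K.d 0 1) w).Exact)
    (ex : ∀ n, (ShortComplex.mk (K.d n (n + 1)) (K.d (n + 1) (n + 2))
      (K.d_comp_d _ _ _)).Exact) :
    InjectiveResolution S.X₁ where
  cocomplex := K.augment (S.g ≫ j) (by rw [Category.assoc, w, comp_zero])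
  injective n := by
    cases n with
    | zero => exact hI
    | succ n => exact hK n
  ι := (CochainComplex.fromSingle₀Equiv _ _).symm ⟨S.f, by
    change S.f ≫ S.g ≫ j = 0
    rw [S.zero_assoc, zero_comp]⟩
  quasiIso := ⟨fun n => by
    have hm := hS.mono_f
    have he := hS.epi_g
    cases n with
    | zero =>
      rw [CochainComplex.quasiIsoAt₀_iff, ShortComplex.quasiIso_iff_of_zeros]
      · have key : (ShortComplex.mk S.f (S.g ≫ j)
            (by rw [S.zero_assoc, zero_comp])).Exact := by
          let α : S ⟶ ShortComplex.mk S.f (S.g ≫ j)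
              (by rw [S.zero_assoc, zero_comp]) :=
            { τ₁ := 𝟙 _
              τ₂ := 𝟙 _
              τ₃ := j }
          have : Mono α.τ₃ := hj
          rw [← ShortComplex.exact_iff_of_epi_of_isIso_of_mono α]
          exact hS.exact
        refine (ShortComplex.exact_and_mono_f_iff_of_iso ?_).2 ⟨key, hm⟩
        refine ShortComplex.isoMk (Iso.refl _) (Iso.refl _) (Iso.refl _) ?_ ?_
        · refine (Category.id_comp _).trans (Eq.trans ?_ (Category.comp_id _).symm)
          exact (CochainComplex.fromSingle₀Equiv_symm_apply_f_zero
            (C := K.augment (S.g ≫ j) (by rw [Category.assoc, w, comp_zero])) S.f (by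
              change S.f ≫ S.g ≫ j = 0
              rw [S.zero_assoc, zero_comp])).symm
        · exact (Category.id_comp _).trans (Category.comp_id _).symm
      all_goals rfl
    | succ n =>
      rw [quasiIsoAt_iff_exactAt]
      · rw [HomologicalComplex.exactAt_iff' _ n (n + 1) (n + 1 + 1) (by simp) (by simp)]
        cases n with
        | zero =>
          let α : ShortComplex.mk (S.g ≫ j) (K.d 0 1)
              (by rw [Category.assoc, w, comp_zero]) ⟶ ShortComplex.mk j (K.d 0 1) w :=
            { τ₁ := S.g
              τ₂ := 𝟙 _
              τ₃ := 𝟙 _ }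
          have : Epi α.τ₁ := he
          exact (ShortComplex.exact_iff_of_epi_of_isIso_of_mono α).2 ex₀
        | succ n => exact ex n
      · apply CochainComplex.exactAt_succ_single_obj⟩

theorem aux_resolution_of_lt {R : Type u} [Ring R] (n : ℕ) : ∀ (M : ModuleCat.{u} R)
    (_ : HasInjectiveDimensionLT M (n + 1)),
    ∃ I : InjectiveResolution M, ∀ i : ℕ, n < i → IsZero (I.cocomplex.X i) := by
  induction n with
  | zero =>
    intro M hM
    have : Injective M := injective_iff_hasInjectiveDimensionLT_one.2 hM
    refine ⟨InjectiveResolution.self M, fun i hi => ?_⟩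
    apply HomologicalComplex.isZero_single_obj_X
    omega
  | succ n ih =>
    intro M hM
    obtain ⟨ip⟩ := EnoughInjectives.presentation M
    have hS := ip.shortExact_shortComplex
    obtain ⟨J, hJ⟩ := ih _ ((hS.hasInjectiveDimensionLT_X₃_iff n ip.injective).2 hM)
    refine ⟨auxSplice _ hS ip.injective J.cocomplex J.injective (J.ι.f 0)
      J.ι_f_zero_comp_complex_d (inferInstanceAs (Mono (J.ι.f 0))) J.exact₀ J.exact_succ, fun i hi => ?_⟩
    cases i with
    | zero => omega
    | succ i => exact hJ i (by omega)

theorem aux_injDim_le_iff {R : Type u} [Ring R] (M : ModuleCat.{u} R) (n : ℕ) :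
    M.injDim ≤ n ↔ HasInjectiveDimensionLT M (n + 1) := by
  constructor
  · intro h
    have hne : {n : ℕ∞ | ∃ I : InjectiveResolution M,
        ∀ i : ℕ, n < (i : ℕ∞) → IsZero (I.cocomplex.X i)}.Nonempty :=
      ⟨⊤, InjectiveResolution.of M, fun i hi => absurd hi (by simp)⟩
    obtain ⟨I, hI⟩ := csInf_mem hne
    exact aux_lt_of_resolution n I fun i hi =>
      hI i (lt_of_le_of_lt h (by exact_mod_cast hi))
  · intro h
    obtain ⟨I, hI⟩ := aux_resolution_of_lt n M h
    exact sInf_le ⟨I, fun i hi => hI i (by exact_mod_cast hi)⟩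

theorem aux_functor {R S : Type u} [Ring R] [Ring S]
    (F : ModuleCat.{u} S ⥤ ModuleCat.{u} R) [F.Additive] [PreservesFiniteLimits F]
    [PreservesFiniteColimits F]
    (hF : ∀ M, Injective M → Injective (F.obj M)) (n : ℕ) :
    ∀ (M : ModuleCat.{u} S) (_ : HasInjectiveDimensionLT M (n + 1)),
      HasInjectiveDimensionLT (F.obj M) (n + 1) := by
  induction n with
  | zero =>
    intro M hM
    exact injective_iff_hasInjectiveDimensionLT_one.1
      (hF M (injective_iff_hasInjectiveDimensionLT_one.2 hM))
  | succ n ih =>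
    intro M hM
    obtain ⟨ip⟩ := EnoughInjectives.presentation M
    have hS := ip.shortExact_shortComplex
    have hS' := hS.map_of_exact F
    exact (hS'.hasInjectiveDimensionLT_X₃_iff n (hF _ ip.injective)).1
      (ih _ ((hS.hasInjectiveDimensionLT_X₃_iff n ip.injective).2 hM))

/-- Restriction along a ring map that makes the target right-projective preserves injectives. -/
theorem aux_baer {R S ι M : Type u} [Ring R] [Ring S] (f : R →+* S) (e : ι → S)
    (Φ : S →+ (ι →₀ R)) (h1 : ∀ x r a, Φ (x * f r) a = Φ x a * r)
    (h2 : ∀ x, (Φ x).sum (fun a r => e a * f r) = x)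
    [AddCommGroup M] [Module R M] [Module S M] (hsm : ∀ (r : R) (m : M), r • m = f r • m)
    (hM : Module.Baer S M) : Module.Baer R M := by
  intro J g
  let p : (J →₀ S) →ₗ[S] S := Finsupp.linearCombination S (fun j : J => f j)
  let h : (J →₀ S) →ₗ[S] M := Finsupp.linearCombination S (fun j : J => g j)
  let Ψ : (J →₀ S) →+ (ι →₀ J) := Finsupp.liftAddHom (fun j : J =>
    (Finsupp.mapRange.addMonoidHom ((smulAddHom R J).flip j)).comp Φ)
  let Θ : (ι →₀ J) →+ M := Finsupp.liftAddHom (fun a : ι =>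
    (DistribSMul.toAddMonoidHom M (e a)).comp g.toAddMonoidHom)
  have hA : ∀ x, h x = Θ (Ψ x) := by
    intro x
    induction x using Finsupp.induction_linear with
    | zero => simp
    | add x y hx hy => simp only [map_add, hx, hy]
    | single j s =>
      have : s • g j = ((Φ s).sum fun a r => e a * f r) • g j := by rw [h2]
      simp only [h, Ψ, Θ, Finsupp.linearCombination_single, Finsupp.liftAddHom_apply_single,
        AddMonoidHom.comp_apply, this]
      simp only [Finsupp.mapRange.addMonoidHom_apply, Finsupp.liftAddHom_apply]
      rw [Finsupp.sum_mapRange_index (by simp), Finsupp.sum, Finset.sum_smul]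
      refine Finset.sum_congr rfl fun a _ => ?_
      simp [mul_smul, hsm]
  have hB : ∀ x a, ((Ψ x a : J) : R) = Φ (p x) a := by
    intro x a
    induction x using Finsupp.induction_linear with
    | zero => simp
    | add x y hx hy => simp [map_add, hx, hy]
    | single j s => simp [p, Ψ, h1]
  have hker : LinearMap.ker p ≤ LinearMap.ker h := by
    intro x hx
    rw [LinearMap.mem_ker] at hx ⊢
    have : Ψ x = 0 := by
      ext a
      rw [hB, hx]; simp
    rw [hA, this, map_zero]
  let g1 : LinearMap.range p →ₗ[S] M :=
    (Submodule.liftQ _ h hker) ∘ₗ (LinearMap.quotKerEquivRange p).symm.toLinearMap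
  obtain ⟨G, hG⟩ := hM (LinearMap.range p) g1
  refine ⟨{ toFun := fun r => G (f r), map_add' := by simp, map_smul' := fun r x => ?_ }, ?_⟩
  · change G (f (r * x)) = r • G (f x)
    rw [hsm, map_mul, ← smul_eq_mul, map_smul]
  · intro x hx
    have hp : p (Finsupp.single ⟨x, hx⟩ 1) = f x := by simp [p]
    have hmem : f x ∈ LinearMap.range p := ⟨_, hp⟩
    change G (f x) = _
    rw [hG _ hmem]
    have : (LinearMap.quotKerEquivRange p).symm ⟨f x, hmem⟩ =
        Submodule.Quotient.mk (Finsupp.single ⟨x, hx⟩ 1) := by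
      rw [LinearEquiv.symm_apply_eq]
      ext
      simp [hp]
    simp [g1, this, h]

theorem aux_main {R S ι : Type u} [Ring R] [Ring S] (f : R →+* S) (e : ι → S)
    (Φ : S →+ (ι →₀ R)) (h1 : ∀ x r a, Φ (x * f r) a = Φ x a * r)
    (h2 : ∀ x, (Φ x).sum (fun a r => e a * f r) = x)
    (π : S →+ R) (h3 : ∀ r x, π (f r * x) = r * π x) (h4 : π 1 = 1) :
    Ring.selfInjDim R ≤ Ring.selfInjDim S := by
  unfold Ring.selfInjDim
  have key : ∀ n : ℕ, (ModuleCat.of S S).injDim ≤ n → (ModuleCat.of R R).injDim ≤ n := by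
    intro n hn
    rw [aux_injDim_le_iff] at hn ⊢
    have hF : ∀ M : ModuleCat.{u} S, Injective M →
        Injective ((ModuleCat.restrictScalars.{u} f).obj M) := by
      intro M hM
      rw [← Module.injective_iff_injective_object] at hM ⊢
      let : Module S ((ModuleCat.restrictScalars.{u} f).obj M) := M.isModule
      exact (aux_baer f e Φ h1 h2 (fun r m => rfl)
        (M := (ModuleCat.restrictScalars.{u} f).obj M)
        (Module.Baer.of_injective (Q := M) hM)).injective
    have : PreservesFiniteLimits (ModuleCat.restrictScalars.{u} f) :=
      ⟨fun J _ _ => ⟨inferInstance⟩⟩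
    have : PreservesFiniteColimits (ModuleCat.restrictScalars.{u} f) :=
      ⟨fun J _ _ => ⟨inferInstance⟩⟩
    have hR := aux_functor (ModuleCat.restrictScalars.{u} f) hF n _ hn
    let ret : Retract (ModuleCat.of R R)
        ((ModuleCat.restrictScalars.{u} f).obj (ModuleCat.of S S)) :=
      { i := ModuleCat.ofHom (Y := (ModuleCat.restrictScalars.{u} f).obj (ModuleCat.of S S))
          { toFun := fun r => (f r : S)
            map_add' := fun a b => map_add f a b
            map_smul' := fun a b => map_mul f a b }
        r := ModuleCat.ofHom (X := (ModuleCat.restrictScalars.{u} f).obj (ModuleCat.of S S))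
          { toFun := fun x => π x
            map_add' := fun a b => map_add π a b
            map_smul' := fun a b => h3 a b }
        retract := by
          ext
          change π (f 1) = 1
          rw [map_one, h4] }
    exact ret.hasInjectiveDimensionLT (n + 1)
  generalize (ModuleCat.of S S).injDim = b at key
  induction b using ENat.recTopCoe with
  | top => exact le_top
  | coe n => exact key n le_rfl

theorem aux_left {k D Q : Type u} [Field k] [Ring D] [Ring Q] [Algebra k D] [Algebra k Q]
    [IsSemisimpleRing D] (f : D →ₐ[k] Q) (hf : Function.Injective f) :
    ∃ π : Q →ₗ[k] D, (∀ d q, π (f d * q) = d * π q) ∧ π 1 = 1 := by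
  let : Module D Q := Module.compHom Q f.toRingHom
  have hsm : ∀ (d : D) (q : Q), d • q = f d * q := fun d q => rfl
  let g : D →ₗ[D] Q :=
    { toFun := f, map_add' := map_add f, map_smul' := fun a b => map_mul f a b }
  have : Module.Injective D D := Module.injective_of_isSemisimpleRing D D
  obtain ⟨h, hh⟩ := Module.Injective.extension_property D D D Q g hf LinearMap.id
  have hmul : ∀ d q, h (f d * q) = d * h q := fun d q => h.map_smul d q
  refine ⟨{ toFun := h, map_add' := map_add h, map_smul' := fun c q => ?_ }, hmul, ?_⟩
  · have := hmul (algebraMap k D c) q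
    rw [f.commutes, ← Algebra.smul_def, ← Algebra.smul_def] at this
    exact this
  · have := LinearMap.congr_fun hh 1
    change h (f 1) = 1 at this
    rwa [map_one] at this

theorem aux_right {k D Q : Type u} [Field k] [Ring D] [Ring Q] [Algebra k D] [Algebra k Q]
    [IsSemisimpleRing D] (f : D →ₐ[k] Q) :
    ∃ σ : Q →ₗ[k] (Q →₀ D), (∀ q d a, σ (q * f d) a = σ q a * d) ∧
      ∀ q, (σ q).sum (fun a d => a * f d) = q := by
  let : Module Dᵐᵒᵖ Q := Module.compHom Q f.toRingHom.op
  have hsm : ∀ (d : Dᵐᵒᵖ) (q : Q), d • q = q * f d.unop := fun d q => rfl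
  have : Module.Projective Dᵐᵒᵖ Q := Module.projective_of_isSemisimpleRing Dᵐᵒᵖ Q
  obtain ⟨s, hs⟩ := Module.projective_def'.1 this
  let t : Q → (Q →₀ D) := fun q => (s q).mapRange MulOpposite.unop rfl
  have hmul : ∀ q d a, t (q * f d) a = t q a * d := by
    intro q d a
    have := s.map_smul (MulOpposite.op d) q
    rw [hsm] at this
    simp only [MulOpposite.unop_op] at this
    simp [t, this]
  refine ⟨{ toFun := t, map_add' := fun a b => ?_, map_smul' := fun c q => ?_ }, hmul, ?_⟩
  · ext x
    simp [t]
  · ext x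
    have := hmul q (algebraMap k D c) x
    rw [f.commutes, ← Algebra.commutes, ← Algebra.commutes, ← Algebra.smul_def,
      ← Algebra.smul_def] at this
    exact this
  · intro q
    have := LinearMap.congr_fun hs q
    simp only [LinearMap.comp_apply, Finsupp.linearCombination_apply, LinearMap.id_apply] at this
    change (t q).sum (fun a d => a * f d) = q
    rw [Finsupp.sum_mapRange_index (by simp)]
    exact this

/-!
Statement 7 (Proposition 1.7(a)): if `D ⊆ Q` are simple artinian `k`-algebras and `U` is any
division `k`-algebra, then `injdim (D ⊗[k] U) ≤ injdim (Q ⊗[k] U)` (injective dimension of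
each ring as a left module over itself).
-/

theorem stmt_7 (k : Type u) [Field k] (D Q U : Type u) [Ring D] [Ring Q]
    [Algebra k D] [Algebra k Q]
    [IsSimpleRing D] [IsArtinianRing D] [IsSimpleRing Q] [IsArtinianRing Q]
    [DivisionRing U] [Algebra k U]
    (f : D →ₐ[k] Q) (hf : Function.Injective f) :
    Ring.selfInjDim (D ⊗[k] U) ≤ Ring.selfInjDim (Q ⊗[k] U) := by
  classical
  have : IsSemisimpleRing D := inferInstance
  obtain ⟨π, hπ, hπ1⟩ := aux_left f hf
  obtain ⟨σ, hσ, hσs⟩ := aux_right f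
  let F : D ⊗[k] U →ₐ[k] Q ⊗[k] U := Algebra.TensorProduct.map f (AlgHom.id k U)
  let Φ : Q ⊗[k] U →ₗ[k] (Q →₀ D ⊗[k] U) :=
    (TensorProduct.finsuppLeft k k D U Q).toLinearMap ∘ₗ LinearMap.rTensor U σ
  refine aux_main (ι := Q) F.toRingHom (fun a => a ⊗ₜ[k] 1) Φ.toAddMonoidHom ?_ ?_
    (LinearMap.rTensor U π).toAddMonoidHom ?_ ?_
  · intro x r a
    change Φ (x * F r) a = Φ x a * r
    induction x using TensorProduct.induction_on with
    | zero => simp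
    | add x y hx hy => simp only [add_mul, map_add, Finsupp.add_apply, hx, hy]
    | tmul q u =>
      induction r using TensorProduct.induction_on with
      | zero => simp
      | add x y hx hy => simp only [mul_add, map_add, Finsupp.add_apply, hx, hy]
      | tmul d v => simp [Φ, F, hσ]
  · intro x
    change (Φ x).sum (fun a r => a ⊗ₜ[k] 1 * F r) = x
    induction x using TensorProduct.induction_on with
    | zero => simp
    | add x y hx hy =>
      rw [map_add, Finsupp.sum_add_index' (by simp) (by simp [mul_add]), hx, hy]
    | tmul q u =>
      have h : Φ (q ⊗ₜ u) = (σ q).mapRange (fun d => d ⊗ₜ[k] u) (by simp) := by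
        ext a
        simp [Φ]
      rw [h, Finsupp.sum_mapRange_index (by simp)]
      conv_rhs => rw [← hσs q]
      simp [F, Finsupp.sum, TensorProduct.sum_tmul]
  · intro r x
    change LinearMap.rTensor U π (F r * x) = r * LinearMap.rTensor U π x
    induction x using TensorProduct.induction_on with
    | zero => simp
    | add x y hx hy => simp only [mul_add, map_add, hx, hy]
    | tmul q u =>
      induction r using TensorProduct.induction_on with
      | zero => simp
      | add x y hx hy => simp only [add_mul, map_add, hx, hy]
      | tmul d v => simp [F, hπ]
  · change LinearMap.rTensor U π 1 = 1
    simp [Algebra.TensorProduct.one_def, hπ1]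
end
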